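/- There exist constants η > 0 and C > 0 such that for every n, every prime p with 2 < p ≤ exp(η·n^{1/4}), and every λ ∈ F_p: |P[det_{F_p}(M_n − λ·I_n) = 0] − 1/p| ≤ C/p² + C·exp(−η·n/log p). -/

import Mathlib

open Finset

noncomputable section

/-- The sign `±1` associated to a Boolean. -/
def signb (R : Type*) [Ring R] (b : Bool) : R := if b then 1 else -1

open Classical in
/-- Uniform/counting probability of an event on a finite sample space. -/
def prob {Ω : Type*} [Fintype Ω] (E : Ω → Prop) : ℝ :=
  ((Finset.univ.filter E).card : ℝ) / (Fintype.card Ω : ℝ)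

/-- The symmetric random sign matrix determined by the Boolean data `ω`
(only the entries `ω i j` with `i ≤ j` are used); it is uniformly distributed
over symmetric `±1` matrices when `ω` is uniform. -/
def symMat (R : Type*) [Ring R] {n : ℕ} (ω : Fin n → Fin n → Bool) :
    Matrix (Fin n) (Fin n) R :=
  Matrix.of fun i j => signb R (ω (min i j) (max i j))

/-- Atom probability of a vector over `ZMod p` w.r.t. i.i.d. Rademacher signs. -/
def rho (p : ℕ) {ι : Type*} [Fintype ι] [DecidableEq ι] (w : ι → ZMod p) : ℝ :=
  ⨆ r : ZMod p, prob (fun ξ : ι → Bool => ∑ i, signb (ZMod p) (ξ i) * w i = r)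

/-- Discrepancy of a vector over `ZMod p` w.r.t. i.i.d. Rademacher signs. -/
def disc (p : ℕ) {ι : Type*} [Fintype ι] [DecidableEq ι] (w : ι → ZMod p) : ℝ :=
  ⨆ x : ZMod p,
    |prob (fun ξ : ι → Bool => ∑ i, signb (ZMod p) (ξ i) * w i = x) - 1 / (p : ℝ)|

/-!
Let `N₁` and `N₂` be the numbers of linearly independent `1`- and `2`-tuples in the kernel of
`M_n - A`. As `(p - 1) 1[det = 0] ≤ N₁ ≤ (p - 1) 1[det = 0] + N₂ / (p ^ 2 - p)`, it suffices that
`E N₁ = 1 + O(1 / p)` and `E N₂ = O(p)`.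

Expanding the event `(M_n - A) v = 0` in characters, the frequency `v uᵀ` contributes at most
`∏_{i < j} |cos (2π ⟨x i, x j⟩ / p)|`, where `x i = (u i, v i)` and `⟨·, ·⟩` is the hyperbolic form.
Split the vectors `x i` into two families `a` and `b`. The energy
`Q y = ∑ i, sin² (2π ⟨a i, y⟩ / p)` satisfies `Q (y + z) ≤ 2 (Q y + Q z)`, so its level sets either
grow geometrically or are trapped in a subspace of low energy. If they grow, few tuples `b` have low
energy; the size of the largest level set is paid for by Parseval, as a large level set confines `a`
to a small set. If they are trapped, almost all of `a` and `b` lie in orthogonal subspaces.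

Cutting the index set into four blocks and applying this to the three ways of halving them confines
the blocks, up to few exceptions, to pairwise orthogonal subspaces. Either these have small total
dimension, which holds for few tuples, or they all equal one Lagrangian subspace `W = W^⊥`. In the
latter case a vector outside `W` saves a constant factor at almost every index. Hence only isotropic
tuples contribute to the main term.
-/

/-! ### The standard character of `ZMod p` -/

section Character

variable {p : ℕ} [Fact p.Prime]

/-- `absCos x = |cos (2πx/p)|`, the modulus of the average of the standard character of `ZMod p`
over `{x, -x}`. -/
def absCos (x : ZMod p) : ℝ := |(ZMod.stdAddChar x).re|

/-- `sinSq x = sin² (2πx/p)`, which measures how far `absCos x` is from `1`. -/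
def sinSq (x : ZMod p) : ℝ := (ZMod.stdAddChar x).im ^ 2

lemma re_sq_add_im_sq_stdAddChar (x : ZMod p) :
    (ZMod.stdAddChar x).re ^ 2 + (ZMod.stdAddChar x).im ^ 2 = 1 := by
  rw [← Complex.sq_norm_sub_sq_re, AddChar.norm_apply]; ring

lemma absCos_nonneg (x : ZMod p) : 0 ≤ absCos x := abs_nonneg _

lemma sinSq_nonneg (x : ZMod p) : 0 ≤ sinSq x := sq_nonneg _

lemma absCos_sq (x : ZMod p) : absCos x ^ 2 = 1 - sinSq x := by
  rw [absCos, sinSq, sq_abs, ← re_sq_add_im_sq_stdAddChar x, add_sub_cancel_right]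

lemma absCos_le_one (x : ZMod p) : absCos x ≤ 1 := by
  nlinarith [absCos_sq x, sinSq_nonneg x]

lemma absCos_le_exp (x : ZMod p) : absCos x ≤ Real.exp (-sinSq x / 2) := by
  refine le_of_sq_le_sq ?_ (Real.exp_pos _).le
  rw [absCos_sq, ← Real.exp_nat_mul]
  calc 1 - sinSq x = -sinSq x + 1 := by ring
    _ ≤ Real.exp (-sinSq x) := Real.add_one_le_exp _
    _ = Real.exp ((2 : ℕ) * (-sinSq x / 2)) := by congr 1; push_cast; ring

@[simp] lemma sinSq_zero : sinSq (0 : ZMod p) = 0 := by simp [sinSq]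

@[simp] lemma sinSq_neg (x : ZMod p) : sinSq (-x) = sinSq x := by
  simp [sinSq, AddChar.map_neg_eq_conj]

lemma sinSq_add_le (x y : ZMod p) : sinSq (x + y) ≤ 2 * sinSq x + 2 * sinSq y := by
  have hx := re_sq_add_im_sq_stdAddChar x
  have hy := re_sq_add_im_sq_stdAddChar y
  rw [sinSq, sinSq, sinSq, AddChar.map_add_eq_mul, Complex.mul_im]
  set a := (ZMod.stdAddChar x).re
  set b := (ZMod.stdAddChar x).im
  set c := (ZMod.stdAddChar y).re
  set d := (ZMod.stdAddChar y).im
  nlinarith [sq_nonneg (a * d - b * c), mul_nonneg (sq_nonneg b) (sq_nonneg d)]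

lemma re_stdAddChar_two_mul (x : ZMod p) : (ZMod.stdAddChar (2 * x)).re = 1 - 2 * sinSq x := by
  rw [two_mul, AddChar.map_add_eq_mul, Complex.mul_re, sinSq, ← re_sq_add_im_sq_stdAddChar x]
  ring

variable {W : Type*} [AddCommGroup W] [Module (ZMod p) W] [Fintype W] {L : W →ₗ[ZMod p] ZMod p}

lemma sum_stdAddChar_linearMap (hL : L ≠ 0) : ∑ w, ZMod.stdAddChar (L w) = 0 := by
  refine AddChar.sum_eq_zero_of_ne_one (ψ := ZMod.stdAddChar.compAddMonoidHom L.toAddMonoidHom)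
    fun h => hL (LinearMap.ext fun w => ZMod.injective_stdAddChar ?_)
  simpa using DFunLike.congr_fun h w

lemma sum_sinSq_linearMap (hp : p ≠ 2) (hL : L ≠ 0) :
    ∑ w, sinSq (L w) = (Fintype.card W : ℝ) / 2 := by
  have two_ne : (2 : ZMod p) ≠ 0 := Ring.two_ne_zero (by rwa [ZMod.ringChar_zmod_n])
  have key : ∑ w, (1 - 2 * sinSq (L w)) = 0 := by
    simp_rw [← re_stdAddChar_two_mul, ← Complex.re_sum]
    exact congrArg Complex.re (sum_stdAddChar_linearMap (smul_ne_zero two_ne hL))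
  rw [sum_sub_distrib, ← mul_sum, sum_const, card_univ, nsmul_one] at key
  linarith

lemma sum_absCos_linearMap_le (hp : p ≠ 2) (hL : L ≠ 0) :
    ∑ w, absCos (L w) ≤ 3 / 4 * Fintype.card W := by
  have tangent (w : W) : absCos (L w) ≤ 25 / 24 - 2 / 3 * sinSq (L w) := by
    nlinarith [absCos_sq (L w), sq_nonneg (absCos (L w) - 3 / 4)]
  calc ∑ w, absCos (L w) ≤ ∑ w, (25 / 24 - 2 / 3 * sinSq (L w)) := sum_le_sum fun w _ => tangent w
    _ = 17 / 24 * Fintype.card W := by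
        rw [sum_sub_distrib, ← mul_sum, sum_sinSq_linearMap hp hL, sum_const, card_univ,
          nsmul_eq_mul]
        ring
    _ ≤ 3 / 4 * Fintype.card W := by gcongr ?_ * _; norm_num

end Character

/-! ### Growth of level sets -/

section Growth

variable {V : Type*} [AddCommGroup V] [Fintype V] {E : V → ℝ} {r : ℝ}

/-- A function on a group that behaves like the square of a seminorm, up to homogeneity. -/
structure IsQuadraticGauge (E : V → ℝ) : Prop where
  map_zero : E 0 = 0
  map_neg (b : V) : E (-b) = E b
  map_add_le (b c : V) : E (b + c) ≤ 2 * E b + 2 * E c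

open Classical in
/-- The sublevel set `{b | E b ≤ r}` as a finset. -/
def levelSet (E : V → ℝ) (r : ℝ) : Finset V := {b | E b ≤ r}

omit [AddCommGroup V] in
lemma mem_levelSet {b : V} : b ∈ levelSet E r ↔ E b ≤ r := by simp [levelSet]

open scoped Pointwise in
lemma IsQuadraticGauge.exists_addSubgroup_of_card_lt (hE : IsQuadraticGauge E) (hr : 0 ≤ r)
    (h : (#(levelSet E (4 * r)) : ℝ) < 3 / 2 * #(levelSet E r)) :
    ∃ H : AddSubgroup V, (∀ b, E b ≤ r → b ∈ H) ∧ ∀ b ∈ H, E b ≤ 4 * r := by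
  classical
  let A : Finset (Multiplicative V) := (levelSet E r).map Multiplicative.ofAdd.toEmbedding
  have mem_A (b : V) : Multiplicative.ofAdd b ∈ A ↔ E b ≤ r := by simp [A, mem_levelSet]
  have add_le {b c : V} (hb : E b ≤ r) (hc : E c ≤ r) : E (b + c) ≤ 4 * r := by
    linarith [hE.map_add_le b c]
  have card_lt : #(A * A) < (3 / 2 : ℚ) * #A := by
    have sub : A * A ⊆ (levelSet E (4 * r)).map Multiplicative.ofAdd.toEmbedding := by
      intro x hx
      obtain ⟨b, hb, c, hc, rfl⟩ := mem_mul.1 hx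
      exact mem_map_of_mem _ (mem_levelSet.2 (add_le ((mem_A b.toAdd).1 hb) ((mem_A c.toAdd).1 hc)))
    have h' : (#(levelSet E (4 * r)) : ℚ) < 3 / 2 * #(levelSet E r) := by
      rw [← Rat.cast_lt (K := ℝ)]
      push_cast
      exact h
    calc (#(A * A) : ℚ) ≤ #(levelSet E (4 * r)) := by exact_mod_cast (card_map _) ▸ card_le_card sub
      _ < 3 / 2 * #A := by simpa only [A, card_map] using h'
  have mem_H (b : V) : b ∈ Subgroup.toAddSubgroup' (invMulSubgroup A card_lt) ↔
      Multiplicative.ofAdd b ∈ A⁻¹ * A := by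
    change Multiplicative.ofAdd b ∈ (invMulSubgroup A card_lt : Set _) ↔ _
    rw [invMulSubgroup_eq_inv_mul, ← coe_mul, mem_coe]
  refine ⟨Subgroup.toAddSubgroup' (invMulSubgroup A card_lt), fun b hb => ?_, fun b hb => ?_⟩
  · exact (mem_H b).2 (mem_mul.2 ⟨1, mem_inv.2 ⟨1, (mem_A 0).2 (hE.map_zero.trans_le hr), inv_one⟩,
      _, (mem_A b).2 hb, one_mul _⟩)
  · obtain ⟨x, hx, y, hy, rfl⟩ := mem_mul.1 ((mem_H b).1 hb)
    obtain ⟨z, hz, rfl⟩ := mem_inv.1 hx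
    exact add_le ((hE.map_neg _).trans_le ((mem_A z.toAdd).1 hz)) ((mem_A y.toAdd).1 hy)

-- Each quadrupling of `r` grows the level set by a factor `3 / 2` until a subgroup appears.
lemma IsQuadraticGauge.card_levelSet_growth (hE : IsQuadraticGauge E) (hr : 0 ≤ r) (t : ℕ) :
    (3 / 2 : ℝ) ^ t * #(levelSet E r) ≤ #(levelSet E (4 ^ t * r)) ∨
      ∃ H : AddSubgroup V, (∀ b, E b ≤ r → b ∈ H) ∧ ∀ b ∈ H, E b ≤ 4 ^ t * r := by
  induction t with
  | zero => left; simp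
  | succ t ih =>
    have hpow : (4 : ℝ) ^ (t + 1) * r = 4 * (4 ^ t * r) := by ring
    have hr_le : r ≤ 4 ^ t * r := le_mul_of_one_le_left hr (one_le_pow₀ (by norm_num))
    rw [hpow]
    obtain ih | ⟨H, hsub, hle⟩ := ih
    · obtain h | h := le_or_gt (3 / 2 * #(levelSet E (4 ^ t * r)) : ℝ)
        #(levelSet E (4 * (4 ^ t * r)))
      · left
        rw [pow_succ]
        linarith
      · obtain ⟨H, hsub, hle⟩ := hE.exists_addSubgroup_of_card_lt (by positivity) h
        exact Or.inr ⟨H, fun b hb => hsub b (hb.trans hr_le), hle⟩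
    · exact Or.inr ⟨H, hsub, fun b hb => (hle b hb).trans (by linarith)⟩

end Growth

/-! ### Exceptional coordinates, sampling and Parseval -/

section Exceptions

variable {ι V : Type*} [Fintype ι] {S : ι → Set V} {x : ι → V}

open Classical in
/-- The coordinates at which `x` leaves the prescribed sets `S`. -/
def exceptions (S : ι → Set V) (x : ι → V) : Finset ι := {i | x i ∉ S i}

@[simp] lemma mem_exceptions {i : ι} : i ∈ exceptions S x ↔ x i ∉ S i := by simp [exceptions]

lemma card_exceptions_mul_le_sum {f : ι → ℝ} {r : ℝ} (hf : ∀ i, 0 ≤ f i)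
    (hr : ∀ i, x i ∉ S i → r ≤ f i) : #(exceptions S x) * r ≤ ∑ i, f i := by
  rw [← nsmul_eq_mul]
  exact (card_nsmul_le_sum _ _ _ fun i hi => hr i (mem_exceptions.1 hi)).trans
    (sum_le_univ_sum_of_nonneg hf)

variable [DecidableEq ι] [Fintype V]

lemma card_exceptions_eq_le (hS : ∀ i, (S i).Nonempty) (X : Finset ι) :
    #{x : ι → V | exceptions S x = X} ≤ Fintype.card V ^ #X * ∏ i, (S i).ncard := by
  classical
  have sub : ({x : ι → V | exceptions S x = X} : Finset _) ⊆
      Fintype.piFinset fun i => if i ∈ X then univ else (S i).toFinset := by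
    intro x hx
    obtain rfl := (mem_filter.1 hx).2
    refine Fintype.mem_piFinset.2 fun i => ?_
    by_cases hi : x i ∈ S i <;> simp [hi]
  calc #{x : ι → V | exceptions S x = X}
      ≤ ∏ i, #(if i ∈ X then univ else (S i).toFinset) :=
        (card_le_card sub).trans_eq (Fintype.card_piFinset _)
    _ ≤ ∏ i, (if i ∈ X then Fintype.card V else 1) * (S i).ncard := by
        refine prod_le_prod' fun i _ => ?_
        split_ifs
        · rw [card_univ]
          exact Nat.le_mul_of_pos_right _ ((Set.ncard_pos (Set.toFinite _)).2 (hS i))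
        · rw [one_mul, Set.ncard_eq_toFinset_card']
    _ = Fintype.card V ^ #X * ∏ i, (S i).ncard := by
        rw [prod_mul_distrib, prod_ite_mem, univ_inter, prod_const]

lemma card_exceptions_le_le [Nonempty V] (hS : ∀ i, (S i).Nonempty) (e : ℕ) :
    #{x : ι → V | #(exceptions S x) ≤ e} ≤
      2 ^ Fintype.card ι * (Fintype.card V ^ e * ∏ i, (S i).ncard) := by
  calc #{x : ι → V | #(exceptions S x) ≤ e}
      = ∑ X, #{x : ι → V | #(exceptions S x) ≤ e ∧ exceptions S x = X} := by
        simp_rw [← filter_filter]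
        exact card_eq_sum_card_fiberwise fun _ _ => mem_coe.2 (mem_univ _)
    _ ≤ ∑ _X : Finset ι, Fintype.card V ^ e * ∏ i, (S i).ncard := by
        refine sum_le_sum fun X _ => ?_
        obtain hX | hX := le_or_gt #X e
        · refine (card_le_card fun x hx => ?_).trans ((card_exceptions_eq_le hS X).trans
            (Nat.mul_le_mul_right _ (Nat.pow_le_pow_right Fintype.card_pos hX)))
          simpa using (mem_filter.1 hx).2.2
        · rw [card_eq_zero.2 (filter_eq_empty_iff.2 _)]
          · exact Nat.zero_le _
          · rintro x - ⟨hle, rfl⟩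
            exact hle.not_gt hX
    _ = 2 ^ Fintype.card ι * (Fintype.card V ^ e * ∏ i, (S i).ncard) := by
        rw [sum_const, card_univ, Fintype.card_finset, smul_eq_mul]

end Exceptions

section Sampling

variable {V : Type*} {D : Finset V}

lemma sum_exp_neg_le {f : V → ℝ} (f_nonneg : ∀ y, 0 ≤ f y) (f_le : ∀ y, f y ≤ 1)
    (hf : (#D : ℝ) / 4 ≤ ∑ y ∈ D, f y) :
    ∑ y ∈ D, Real.exp (-f y) ≤ #D * Real.exp (-1 / 8) := by
  have chord (y : V) : Real.exp (-f y) ≤ 1 - f y / 2 := by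
    rw [Real.exp_neg, inv_le_iff_one_le_mul₀ (Real.exp_pos _)]
    nlinarith [Real.add_one_le_exp (f y), f_nonneg y, f_le y]
  calc ∑ y ∈ D, Real.exp (-f y) ≤ ∑ y ∈ D, (1 - f y / 2) := sum_le_sum fun y _ => chord y
    _ = #D - (∑ y ∈ D, f y) / 2 := by rw [sum_sub_distrib, ← sum_div, sum_const, nsmul_one]
    _ ≤ #D * (-1 / 8 + 1) := by linarith
    _ ≤ #D * Real.exp (-1 / 8) := by gcongr; exact Real.add_one_le_exp _

lemma sum_piFinset_exp_neg_sum_le {f : V → ℝ} (f_nonneg : ∀ y, 0 ≤ f y) (f_le : ∀ y, f y ≤ 1)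
    (hf : (#D : ℝ) / 4 ≤ ∑ y ∈ D, f y) (l : ℕ) :
    ∑ c ∈ Fintype.piFinset fun _ : Fin l => D, Real.exp (-∑ k, f (c k)) ≤
      #D ^ l * (Real.exp (-l / 16) * Real.exp (-l / 16)) := by
  calc ∑ c ∈ Fintype.piFinset fun _ : Fin l => D, Real.exp (-∑ k, f (c k))
      = (∑ y ∈ D, Real.exp (-f y)) ^ l := by
        simp_rw [← sum_neg_distrib, Real.exp_sum]
        rw [← prod_univ_sum (fun _ : Fin l => D) (fun _ y => Real.exp (-f y)), prod_const,
          card_univ, Fintype.card_fin]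
    _ ≤ (#D * Real.exp (-1 / 8)) ^ l := by
        gcongr
        exact sum_exp_neg_le f_nonneg f_le hf
    _ = #D ^ l * (Real.exp (-l / 16) * Real.exp (-l / 16)) := by
        rw [mul_pow, ← Real.exp_nat_mul, ← Real.exp_add]
        ring_nf

-- A random sample of `l` points of `D` fails with probability at most `|V| exp (-l / 16)`.
lemma exists_sample [Fintype V] {g : V → V → ℝ} (g_nonneg : ∀ x y, 0 ≤ g x y)
    (g_le : ∀ x y, g x y ≤ 1) (hD : D.Nonempty) {l : ℕ}
    (hl : Fintype.card V * Real.exp (-(l : ℝ) / 16) < 1) :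
    ∃ c : Fin l → V, (∀ k, c k ∈ D) ∧
      ∀ x, ∑ k, g x (c k) ≤ l / 16 → ∑ y ∈ D, g x y ≤ (#D : ℝ) / 4 := by
  classical
  let bad : Finset V := {x | (#D : ℝ) / 4 < ∑ y ∈ D, g x y}
  obtain ⟨c, hc, hlt⟩ : ∃ c ∈ Fintype.piFinset fun _ : Fin l => D,
      ∑ x ∈ bad, Real.exp (-∑ k, g x (c k)) < Real.exp (-l / 16) := by
    refine exists_lt_of_sum_lt ?_
    rw [sum_comm, sum_const, Fintype.card_piFinset, prod_const, card_univ, Fintype.card_fin,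
      nsmul_eq_mul, Nat.cast_pow]
    calc ∑ x ∈ bad, ∑ c ∈ Fintype.piFinset fun _ : Fin l => D, Real.exp (-∑ k, g x (c k))
        ≤ #bad * (#D ^ l * (Real.exp (-l / 16) * Real.exp (-l / 16))) := by
          rw [← nsmul_eq_mul]
          exact sum_le_card_nsmul _ _ _ fun x hx =>
            sum_piFinset_exp_neg_sum_le (g_nonneg x) (g_le x) (mem_filter.1 hx).2.le l
      _ ≤ Fintype.card V * (#D ^ l * (Real.exp (-l / 16) * Real.exp (-l / 16))) := by
          gcongr
          exact card_le_univ bad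
      _ = (Fintype.card V * Real.exp (-l / 16)) * (#D ^ l * Real.exp (-l / 16)) := by ring
      _ < #D ^ l * Real.exp (-l / 16) := by
          have := hD.card_pos
          exact mul_lt_of_lt_one_left (by positivity) hl
  refine ⟨c, Fintype.mem_piFinset.1 hc, fun x hx => not_lt.1 fun hbad => hlt.not_ge ?_⟩
  calc Real.exp (-l / 16) ≤ Real.exp (-∑ k, g x (c k)) := Real.exp_le_exp.2 (by linarith)
    _ ≤ ∑ x ∈ bad, Real.exp (-∑ k, g x (c k)) :=
        single_le_sum (f := fun x => Real.exp (-∑ k, g x (c k))) (fun _ _ => (Real.exp_pos _).le)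
          (mem_filter.2 ⟨mem_univ x, hbad⟩)

end Sampling

section Parseval

variable {p : ℕ} [Fact p.Prime] {V : Type*} [AddCommGroup V] [Module (ZMod p) V] [Fintype V]
  {B : LinearMap.BilinForm (ZMod p) V}

lemma sum_norm_sq_sum_stdAddChar (hB : B.SeparatingRight) (D : Finset V) :
    ∑ x, ‖∑ y ∈ D, ZMod.stdAddChar (B x y)‖ ^ 2 = Fintype.card V * (#D : ℝ) := by
  classical
  have expand (x : V) : ((‖∑ y ∈ D, ZMod.stdAddChar (B x y)‖ ^ 2 : ℝ) : ℂ) =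
      ∑ y ∈ D, ∑ z ∈ D, ZMod.stdAddChar (B x (y - z)) := by
    rw [← Complex.normSq_eq_norm_sq, ← Complex.mul_conj, map_sum, sum_mul_sum]
    refine sum_congr rfl fun y _ => sum_congr rfl fun z _ => ?_
    rw [map_sub, sub_eq_add_neg, AddChar.map_add_eq_mul, AddChar.map_neg_eq_conj]
  have orthogonality (y z : V) :
      ∑ x, ZMod.stdAddChar (B x (y - z)) = if y = z then (Fintype.card V : ℂ) else 0 := by
    split_ifs with h
    · simp [h]
    · refine sum_stdAddChar_linearMap (L := B.flip (y - z)) fun h0 => h (sub_eq_zero.1 (hB _ ?_))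
      exact fun x => LinearMap.congr_fun h0 x
  rw [← Complex.ofReal_inj, Complex.ofReal_sum]
  simp_rw [expand]
  rw [sum_comm]
  simp_rw [sum_comm (s := univ) (t := D), orthogonality, sum_ite_eq]
  rw [sum_congr rfl fun y hy => if_pos hy, sum_const, nsmul_eq_mul]
  push_cast
  ring

lemma card_mul_card_le_of_sum_sinSq_le (hp : p ≠ 2) (hB : B.SeparatingRight) {D S : Finset V}
    (hS : ∀ x ∈ S, ∑ y ∈ D, sinSq (B x y) ≤ (#D : ℝ) / 4) :
    (#D : ℝ) * #S ≤ 4 * Fintype.card V := by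
  rcases D.eq_empty_or_nonempty with rfl | hD
  · simp
  have two_ne : (2 : ZMod p) ≠ 0 := Ring.two_ne_zero (by rwa [ZMod.ringChar_zmod_n])
  have hB₂ : ((2 : ZMod p) • B).SeparatingRight := fun y hy =>
    hB y fun x => (mul_eq_zero.1 (hy x)).resolve_left two_ne
  have large (x : V) (hx : x ∈ S) :
      ((#D : ℝ) / 2) ^ 2 ≤ ‖∑ y ∈ D, ZMod.stdAddChar (((2 : ZMod p) • B) x y)‖ ^ 2 := by
    gcongr
    refine le_trans ?_ (Complex.re_le_norm _)
    simp_rw [Complex.re_sum, LinearMap.smul_apply, smul_eq_mul, re_stdAddChar_two_mul]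
    rw [sum_sub_distrib, ← mul_sum, sum_const, nsmul_one]
    linarith [hS x hx]
  have parseval : #S * ((#D : ℝ) / 2) ^ 2 ≤ Fintype.card V * #D := by
    rw [← sum_norm_sq_sum_stdAddChar hB₂, ← nsmul_eq_mul]
    exact (card_nsmul_le_sum _ _ _ large).trans
      (sum_le_univ_sum_of_nonneg fun _ => by positivity)
  have hDpos : (0 : ℝ) < #D := by exact_mod_cast hD.card_pos
  refine le_of_mul_le_mul_left ?_ hDpos
  linarith

end Parseval

/-! ### Products of `absCos` over a bipartite pattern -/

section Bipartite

variable {p : ℕ} [Fact p.Prime] {V : Type*} [AddCommGroup V] [Module (ZMod p) V]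
  {B : LinearMap.BilinForm (ZMod p) V} {ι κ : Type*} [Fintype ι] [Fintype κ]
  {a : ι → V} {b : κ → V} {e t : ℕ}

/-- The total defect of the characters `B (a i)` at `v`; it is small when `v` is almost orthogonal
to most of the `a i`. -/
def energy (B : LinearMap.BilinForm (ZMod p) V) (a : ι → V) (v : V) : ℝ := ∑ i, sinSq (B (a i) v)

/-- Some subspace `H` contains all but `e` of the `b j` while `H^⊥` contains all but `e` of the
`a i`. -/
def AlmostOrthogonal (B : LinearMap.BilinForm (ZMod p) V) (e : ℕ) (a : ι → V) (b : κ → V) : Prop :=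
  ∃ H : Submodule (ZMod p) V, #(exceptions (fun _ => (B.orthogonal H : Set V)) a) ≤ e ∧
    #(exceptions (fun _ => (H : Set V)) b) ≤ e

lemma energy_nonneg (v : V) : 0 ≤ energy B a v := sum_nonneg fun _ _ => sinSq_nonneg _

lemma isQuadraticGauge_energy : IsQuadraticGauge (energy B a) where
  map_zero := by simp [energy]
  map_neg v := by simp [energy]
  map_add_le v w := by
    simp_rw [energy, mul_sum, ← sum_add_distrib, map_add]
    exact sum_le_sum fun i _ => sinSq_add_le _ _

lemma prod_prod_absCos_le_one : ∏ i, ∏ j, absCos (B (a i) (b j)) ≤ 1 :=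
  prod_le_one (fun _ _ => prod_nonneg fun _ _ => absCos_nonneg _) fun _ _ =>
    prod_le_one (fun _ _ => absCos_nonneg _) fun _ _ => absCos_le_one _

lemma prod_prod_absCos_le_exp :
    ∏ i, ∏ j, absCos (B (a i) (b j)) ≤ Real.exp (-(∑ j, energy B a (b j)) / 2) := by
  calc ∏ i, ∏ j, absCos (B (a i) (b j)) ≤ ∏ i, ∏ j, Real.exp (-sinSq (B (a i) (b j)) / 2) :=
        prod_le_prod (fun i _ => prod_nonneg fun _ _ => absCos_nonneg _) fun i _ =>
          prod_le_prod (fun _ _ => absCos_nonneg _) fun j _ => absCos_le_exp _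
    _ = Real.exp (-(∑ j, energy B a (b j)) / 2) := by
        simp_rw [← Real.exp_sum, energy, ← sum_div, sum_neg_distrib]
        rw [sum_comm]

lemma card_exceptions_orthogonal_le [Finite V] (hp : p ≠ 2) (hsymm : B.IsSymm)
    {H : Submodule (ZMod p) V} (hH : ∀ v ∈ H, energy B a v ≤ (e : ℝ) / 2) :
    #(exceptions (fun _ => (B.orthogonal H : Set V)) a) ≤ e := by
  classical
  have := Fintype.ofFinite H
  have half (i : ι) (hi : a i ∉ B.orthogonal H) :
      ∑ v : H, sinSq (B (a i) v) = (Fintype.card H : ℝ) / 2 := by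
    refine sum_sinSq_linearMap hp (L := (B (a i)).comp H.subtype) fun h0 => hi ?_
    refine (LinearMap.BilinForm.mem_orthogonal_iff).2 fun v hv => ?_
    exact (hsymm.eq v (a i)).trans (LinearMap.congr_fun h0 ⟨v, hv⟩)
  have markov : #(exceptions (fun _ => (B.orthogonal H : Set V)) a) * ((Fintype.card H : ℝ) / 2) ≤
      e * ((Fintype.card H : ℝ) / 2) := by
    calc _ ≤ ∑ i, ∑ v : H, sinSq (B (a i) v) :=
          card_exceptions_mul_le_sum (fun i => sum_nonneg fun _ _ => sinSq_nonneg _)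
            fun i hi => (half i hi).ge
      _ = ∑ v : H, energy B a v := sum_comm
      _ ≤ ∑ _v : H, (e : ℝ) / 2 := sum_le_sum fun v _ => hH v v.2
      _ = e * ((Fintype.card H : ℝ) / 2) := by rw [sum_const, card_univ, nsmul_eq_mul]; ring
  have : (0 : ℝ) < Fintype.card H := by exact_mod_cast Fintype.card_pos
  exact_mod_cast le_of_mul_le_mul_right markov (by positivity)

variable [Fintype V]

lemma pos_of_card_mul_exp_lt_one (he : Fintype.card V * Real.exp (-(e : ℝ) / 16) < 1) :
    (0 : ℝ) < e := by
  have hV : (1 : ℝ) ≤ Fintype.card V := by exact_mod_cast Fintype.card_pos (α := V)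
  by_contra! h
  nlinarith [Real.one_le_exp (x := -(e : ℝ) / 16) (by linarith)]

-- If `energy B a` has a large level set, then a sample of it confines `a` to a small one.
lemma exists_levelSet_energy_mul_le (hp : p ≠ 2) (hsymm : B.IsSymm) (hB : B.SeparatingRight)
    (he : Fintype.card V * Real.exp (-(e : ℝ) / 16) < 1) (a : ι → V) :
    ∃ c : Fin e → V, #(exceptions (fun _ => (levelSet (energy B c) (e / 16) : Set V)) a) ≤ e ∧
      (#(levelSet (energy B a) (e / 16)) : ℝ) * #(levelSet (energy B c) (e / 16)) ≤
        4 * Fintype.card V := by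
  have e_pos := pos_of_card_mul_exp_lt_one he
  have nonempty : (levelSet (energy B a) (e / 16)).Nonempty :=
    ⟨0, mem_levelSet.2 (isQuadraticGauge_energy.map_zero.trans_le (by positivity))⟩
  obtain ⟨c, c_mem, hc⟩ := exists_sample (g := fun x y => sinSq (B y x)) (fun _ _ => sinSq_nonneg _)
    (fun x y => by linarith [absCos_sq (B y x), sq_nonneg (absCos (B y x))]) nonempty he
  refine ⟨c, ?_, card_mul_card_le_of_sum_sinSq_le hp hB fun x hx => ?_⟩
  · have markov : #(exceptions (fun _ => (levelSet (energy B c) (e / 16) : Set V)) a) *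
        ((e : ℝ) / 16) ≤ e * ((e : ℝ) / 16) := by
      calc _ ≤ ∑ i, energy B c (a i) :=
            card_exceptions_mul_le_sum (fun i => energy_nonneg _) fun i hi => by
              rw [mem_coe, mem_levelSet, not_le] at hi
              exact hi.le
        _ = ∑ k, energy B a (c k) := by
            simp_rw [energy, fun k i => hsymm.eq (c k) (a i)]
            exact sum_comm
        _ ≤ ∑ _k : Fin e, (e : ℝ) / 16 := sum_le_sum fun k _ => mem_levelSet.1 (c_mem k)
        _ = e * ((e : ℝ) / 16) := by rw [sum_const, card_univ, Fintype.card_fin, nsmul_eq_mul]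
    exact_mod_cast le_of_mul_le_mul_right markov (by positivity)
  · simp_rw [hsymm.eq x]
    exact hc x (mem_levelSet (E := energy B c).1 hx)

lemma pow_mul_div_pow_le {s v : ℝ} (hs : 1 ≤ s) (hsv : s ≤ v) {m n M : ℕ} (hm : m ≤ M)
    (hn : n ≤ M) : s ^ m * (v / s) ^ n ≤ v ^ M := by
  have hs0 : 0 < s := by linarith
  calc s ^ m * (v / s) ^ n ≤ s ^ M * (v / s) ^ M := by
        have := (one_le_div hs0).2 hsv
        exact mul_le_mul (pow_le_pow_right₀ hs hm) (pow_le_pow_right₀ this hn) (by positivity)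
          (by positivity)
    _ = v ^ M := by rw [← mul_pow, mul_div_cancel₀ _ hs0.ne']

lemma sum_card_exceptions_le_pow_le [DecidableEq ι] {S : Finset V} (hS : S.Nonempty) (e : ℕ)
    {N M : ℕ} (hι : Fintype.card ι ≤ M) (hN : N ≤ M) :
    ∑ a : ι → V with #(exceptions (fun _ => (S : Set V)) a) ≤ e,
        (4 * ((Fintype.card V : ℝ) / #S)) ^ N ≤
      2 ^ Fintype.card ι * 4 ^ N * (Fintype.card V : ℝ) ^ (M + e) := by
  have few := card_exceptions_le_le (fun _ : ι => coe_nonempty.2 hS) e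
  rw [prod_const, card_univ, Set.ncard_coe_finset] at few
  rw [sum_const, nsmul_eq_mul]
  calc _ ≤ ((2 ^ Fintype.card ι * (Fintype.card V ^ e * #S ^ Fintype.card ι) : ℕ) : ℝ) *
        (4 * ((Fintype.card V : ℝ) / #S)) ^ N := by gcongr
    _ = 2 ^ Fintype.card ι * 4 ^ N * (Fintype.card V : ℝ) ^ e *
        (#S ^ Fintype.card ι * (Fintype.card V / #S) ^ N) := by
        push_cast
        rw [mul_pow]
        ring
    _ ≤ 2 ^ Fintype.card ι * 4 ^ N * (Fintype.card V : ℝ) ^ e * (Fintype.card V : ℝ) ^ M := by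
        gcongr
        exact pow_mul_div_pow_le (by exact_mod_cast hS.card_pos) (by exact_mod_cast card_le_univ _)
          hι hN
    _ = _ := by ring

lemma sum_card_levelSet_energy_pow_le [DecidableEq ι] (hp : p ≠ 2) (hsymm : B.IsSymm)
    (hB : B.SeparatingRight)
    (he : Fintype.card V * Real.exp (-(e : ℝ) / 16) < 1) {N M : ℕ} (hι : Fintype.card ι ≤ M)
    (hN : N ≤ M) :
    ∑ a : ι → V, (#(levelSet (energy B a) (e / 16)) : ℝ) ^ N ≤
      2 ^ Fintype.card ι * 4 ^ N * (Fintype.card V : ℝ) ^ (M + 2 * e) := by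
  have e_pos := pos_of_card_mul_exp_lt_one he
  let S (c : Fin e → V) : Finset V := levelSet (energy B c) (e / 16)
  have S_nonempty (c : Fin e → V) : (S c).Nonempty :=
    ⟨0, mem_levelSet.2 (isQuadraticGauge_energy.map_zero.trans_le (by positivity))⟩
  have pointwise (a : ι → V) : (#(levelSet (energy B a) (e / 16)) : ℝ) ^ N ≤
      ∑ c, if #(exceptions (fun _ => (S c : Set V)) a) ≤ e then
        (4 * ((Fintype.card V : ℝ) / #(S c))) ^ N else 0 := by
    obtain ⟨c, hc, hle⟩ := exists_levelSet_energy_mul_le hp hsymm hB he a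
    have S_pos : (0 : ℝ) < #(S c) := by exact_mod_cast (S_nonempty c).card_pos
    refine le_trans ?_ (single_le_sum (fun c _ => ?_) (mem_univ c))
    · rw [if_pos hc]
      refine pow_le_pow_left₀ (by positivity) ?_ N
      rwa [← mul_div_assoc, le_div_iff₀ S_pos]
    · split_ifs <;> positivity
  calc _ ≤ ∑ a : ι → V, ∑ c, if #(exceptions (fun _ => (S c : Set V)) a) ≤ e then
        (4 * ((Fintype.card V : ℝ) / #(S c))) ^ N else 0 := sum_le_sum fun a _ => pointwise a
    _ ≤ ∑ _c : Fin e → V, 2 ^ Fintype.card ι * 4 ^ N * (Fintype.card V : ℝ) ^ (M + e) := by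
        rw [sum_comm]
        refine sum_le_sum fun c _ => ?_
        rw [← sum_filter]
        exact sum_card_exceptions_le_pow_le (S_nonempty c) e hι hN
    _ = 2 ^ Fintype.card ι * 4 ^ N * (Fintype.card V : ℝ) ^ (M + 2 * e) := by
        rw [sum_const, card_univ, Fintype.card_fun, Fintype.card_fin, nsmul_eq_mul]
        push_cast
        ring

/-- The level set of `energy B a` at radius `e / (16 * 4 ^ t)` contains all but `e` of the `b j`,
and it grows by a factor `3 / 2` at each of the `t` quadruplings leading to radius `e / 16`. -/
def LevelGrowth (B : LinearMap.BilinForm (ZMod p) V) (e t : ℕ) (a : ι → V) (b : κ → V) : Prop :=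
  #(exceptions (fun _ => (levelSet (energy B a) (e / (16 * 4 ^ t)) : Set V)) b) ≤ e ∧
    (3 / 2 : ℝ) ^ t * #(levelSet (energy B a) (e / (16 * 4 ^ t))) ≤
      #(levelSet (energy B a) (e / 16))

-- The alternative: `∑ j, energy B a (b j)` is large, or most `b j` lie in a level set of
-- `energy B a`, which then either grows or is trapped in a subgroup.
lemma prod_prod_absCos_le_or_growth (hp : p ≠ 2) (hsymm : B.IsSymm) (he : (0 : ℝ) < e) (t : ℕ)
    (hab : ¬ AlmostOrthogonal B e a b) :
    ∏ i, ∏ j, absCos (B (a i) (b j)) ≤ Real.exp (-(e : ℝ) ^ 2 / (32 * 4 ^ t)) ∨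
      LevelGrowth B e t a b := by
  have hr : (4 : ℝ) ^ t * (e / (16 * 4 ^ t)) = e / 16 := by field_simp
  obtain large | small := le_or_gt (e * (e / (16 * 4 ^ t)) : ℝ) (∑ j, energy B a (b j))
  · left
    refine prod_prod_absCos_le_exp.trans (Real.exp_le_exp.2 ?_)
    calc -(∑ j, energy B a (b j)) / 2 ≤ -(e * (e / (16 * 4 ^ t))) / 2 := by linarith
      _ = -(e : ℝ) ^ 2 / (32 * 4 ^ t) := by field_simp; norm_num
  have few : #(exceptions (fun _ => (levelSet (energy B a) (e / (16 * 4 ^ t)) : Set V)) b) ≤ e := by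
    have markov := card_exceptions_mul_le_sum (r := (e : ℝ) / (16 * 4 ^ t)) (x := b)
      (S := fun _ => (levelSet (energy B a) (e / (16 * 4 ^ t)) : Set V))
      (fun j => energy_nonneg (B := B) (a := a) (b j)) fun j hj => by
        rw [mem_coe, mem_levelSet, not_le] at hj
        exact hj.le
    exact_mod_cast le_of_mul_le_mul_right (markov.trans small.le) (by positivity)
  obtain grow | ⟨H, sub_H, H_le⟩ := (isQuadraticGauge_energy (B := B) (a := a)).card_levelSet_growth
    (r := e / (16 * 4 ^ t)) (by positivity) t
  · exact Or.inr ⟨few, hr ▸ grow⟩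
  refine absurd ⟨AddSubgroup.toZModSubmodule p H, ?_, (card_le_card fun j hj => ?_).trans few⟩ hab
  · exact card_exceptions_orthogonal_le hp hsymm fun v hv => (H_le v hv).trans (by linarith)
  · rw [mem_exceptions] at hj ⊢
    exact fun h => hj (sub_H _ (mem_levelSet.1 h))

open Classical in
lemma card_levelGrowth_le [DecidableEq κ] (a : ι → V) (he : (0 : ℝ) < e) (t : ℕ) :
    (#{b : κ → V | LevelGrowth B e t a b} : ℝ) ≤
      2 ^ Fintype.card κ * (2 / 3 : ℝ) ^ (t * Fintype.card κ) * (Fintype.card V : ℝ) ^ e *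
        #(levelSet (energy B a) (e / 16)) ^ Fintype.card κ := by
  unfold LevelGrowth
  by_cases grow : (3 / 2 : ℝ) ^ t * #(levelSet (energy B a) (e / (16 * 4 ^ t))) ≤
      #(levelSet (energy B a) (e / 16))
  · simp only [grow, and_true]
    have nonempty : (levelSet (energy B a) (e / (16 * 4 ^ t))).Nonempty :=
      ⟨0, mem_levelSet.2 (isQuadraticGauge_energy.map_zero.trans_le (by positivity))⟩
    have few := card_exceptions_le_le (fun _ : κ => coe_nonempty.2 nonempty) e
    rw [prod_const, card_univ, Set.ncard_coe_finset] at few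
    have shrink : (#(levelSet (energy B a) (e / (16 * 4 ^ t))) : ℝ) ≤
        (2 / 3) ^ t * #(levelSet (energy B a) (e / 16)) := by
      calc _ = (2 / 3 : ℝ) ^ t *
            ((3 / 2) ^ t * #(levelSet (energy B a) (e / (16 * 4 ^ t)))) := by
            rw [← mul_assoc, ← mul_pow]; norm_num
        _ ≤ _ := by gcongr
    calc _ ≤ 2 ^ Fintype.card κ * ((Fintype.card V : ℝ) ^ e *
          #(levelSet (energy B a) (e / (16 * 4 ^ t))) ^ Fintype.card κ) := by exact_mod_cast few
      _ ≤ 2 ^ Fintype.card κ * ((Fintype.card V : ℝ) ^ e *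
          ((2 / 3) ^ t * #(levelSet (energy B a) (e / 16))) ^ Fintype.card κ) := by gcongr
      _ = _ := by rw [mul_pow, pow_mul]; ring
  · simp only [grow, and_false, filter_false, card_empty, Nat.cast_zero]
    positivity

open Classical in
theorem sum_prod_absCos_not_almostOrthogonal_le [DecidableEq ι] [DecidableEq κ] (hp : p ≠ 2)
    (hsymm : B.IsSymm) (hB : B.SeparatingRight)
    (he : Fintype.card V * Real.exp (-(e : ℝ) / 16) < 1) (t : ℕ) {M : ℕ}
    (hι : Fintype.card ι ≤ M) (hκ : Fintype.card κ ≤ M) :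
    ∑ a : ι → V, ∑ b : κ → V with ¬ AlmostOrthogonal B e a b,
        ∏ i, ∏ j, absCos (B (a i) (b j)) ≤
      (Fintype.card V : ℝ) ^ (Fintype.card ι + Fintype.card κ) *
          Real.exp (-(e : ℝ) ^ 2 / (32 * 4 ^ t)) +
        2 ^ (Fintype.card ι + Fintype.card κ) * (4 * (2 / 3 : ℝ) ^ t) ^ Fintype.card κ *
          (Fintype.card V : ℝ) ^ (M + 3 * e) := by
  have e_pos := pos_of_card_mul_exp_lt_one he
  let ε := Real.exp (-(e : ℝ) ^ 2 / (32 * 4 ^ t))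
  let v : ℝ := Fintype.card V
  have pointwise (a : ι → V) (b : κ → V) (hab : ¬ AlmostOrthogonal B e a b) :
      ∏ i, ∏ j, absCos (B (a i) (b j)) ≤ ε + if LevelGrowth B e t a b then 1 else 0 := by
    obtain h | h := prod_prod_absCos_le_or_growth hp hsymm e_pos t hab
    · exact h.trans (le_add_of_nonneg_right (by split_ifs <;> norm_num))
    · rw [if_pos h]
      exact prod_prod_absCos_le_one.trans (le_add_of_nonneg_left (Real.exp_pos _).le)
  calc ∑ a : ι → V, ∑ b : κ → V with ¬ AlmostOrthogonal B e a b, ∏ i, ∏ j, absCos (B (a i) (b j))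
      ≤ ∑ a : ι → V, ∑ b : κ → V, (ε + if LevelGrowth B e t a b then 1 else 0) := by
        refine sum_le_sum fun a _ =>
          (sum_le_sum fun b hb => pointwise a b (mem_filter.1 hb).2).trans
            (sum_le_univ_sum_of_nonneg fun b => add_nonneg (Real.exp_pos _).le ?_)
        split_ifs <;> norm_num
    _ = v ^ (Fintype.card ι + Fintype.card κ) * ε +
          ∑ a : ι → V, (#{b : κ → V | LevelGrowth B e t a b} : ℝ) := by
        simp only [sum_add_distrib, natCast_card_filter, sum_const, card_univ, Fintype.card_fun,
          nsmul_eq_mul, pow_add, mul_assoc, Nat.cast_pow, v]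
    _ ≤ v ^ (Fintype.card ι + Fintype.card κ) * ε + ∑ a : ι → V, 2 ^ Fintype.card κ *
          (2 / 3 : ℝ) ^ (t * Fintype.card κ) * v ^ e *
            #(levelSet (energy B a) (e / 16)) ^ Fintype.card κ := by
        gcongr with a _
        exact card_levelGrowth_le a e_pos t
    _ ≤ v ^ (Fintype.card ι + Fintype.card κ) * ε + 2 ^ Fintype.card κ *
          (2 / 3 : ℝ) ^ (t * Fintype.card κ) * v ^ e *
            (2 ^ Fintype.card ι * 4 ^ Fintype.card κ * v ^ (M + 2 * e)) := by
        rw [← mul_sum]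
        gcongr
        exact sum_card_levelSet_energy_pow_le hp hsymm hB he hι hκ
    _ = _ := by rw [mul_pow, ← pow_mul]; ring

end Bipartite

/-! ### The decay product and its sum over nearly Lagrangian tuples -/

lemma card_filter_card_le_le {ι : Type*} [Fintype ι] (e : ℕ) :
    (#{X : Finset ι | #X ≤ e} : ℝ) ≤ 4 ^ e * (5 / 4) ^ Fintype.card ι := by
  have binomial : ∑ X : Finset ι, (1 / 4 : ℝ) ^ #X = (5 / 4) ^ Fintype.card ι := by
    have := Fintype.sum_pow_mul_eq_add_pow ι (1 / 4 : ℝ) 1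
    norm_num at this ⊢
    exact this
  calc (#{X : Finset ι | #X ≤ e} : ℝ) ≤ ∑ X : Finset ι with #X ≤ e, 4 ^ e * (1 / 4 : ℝ) ^ #X := by
        rw [← nsmul_one]
        refine card_nsmul_le_sum _ _ _ fun X hX => ?_
        rw [one_div, inv_pow, ← div_eq_mul_inv, one_le_div (by positivity)]
        exact pow_le_pow_right₀ (by norm_num) (mem_filter.1 hX).2
    _ ≤ ∑ X : Finset ι, 4 ^ e * (1 / 4 : ℝ) ^ #X := sum_le_univ_sum_of_nonneg fun _ => by positivity
    _ = 4 ^ e * (5 / 4) ^ Fintype.card ι := by rw [← mul_sum, binomial]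

section Decay

variable {p : ℕ} [Fact p.Prime] {V : Type*} [AddCommGroup V] [Module (ZMod p) V]
  {B : LinearMap.BilinForm (ZMod p) V} {ι : Type*} [Fintype ι] [LinearOrder ι] {x : ι → V}

/-- The product of `absCos (B (x i) (x j))` over unordered pairs, which dominates the characteristic
function of the entries of a random symmetric sign matrix. -/
def decay (B : LinearMap.BilinForm (ZMod p) V) (x : ι → V) : ℝ :=
  ∏ q : ι × ι with q.1 < q.2, absCos (B (x q.1) (x q.2))

lemma decay_nonneg : 0 ≤ decay B x := prod_nonneg fun _ _ => absCos_nonneg _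

lemma decay_le_one : decay B x ≤ 1 :=
  prod_le_one (fun _ _ => absCos_nonneg _) fun _ _ => absCos_le_one _

lemma decay_le_prod_prod (hsymm : B.IsSymm) {S T : Finset ι} (hST : Disjoint S T) :
    decay B x ≤ ∏ i ∈ S, ∏ j ∈ T, absCos (B (x i) (x j)) := by
  let sort (q : ι × ι) : ι × ι := (min q.1 q.2, max q.1 q.2)
  have ne {q : ι × ι} (hq : q ∈ S ×ˢ T) : q.1 ≠ q.2 := fun h =>
    disjoint_left.1 hST (mem_product.1 hq).1 (h ▸ (mem_product.1 hq).2)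
  have sort_injOn : Set.InjOn sort (S ×ˢ T : Finset (ι × ι)) := by
    rintro ⟨i, j⟩ hij ⟨k, l⟩ hkl h
    rw [mem_coe, mem_product] at hij hkl
    have hil : i ≠ l := fun h => disjoint_left.1 hST hij.1 (h ▸ hkl.2)
    have hkj : k ≠ j := fun h => disjoint_left.1 hST hkl.1 (h ▸ hij.2)
    simp only [sort, Prod.mk.injEq] at h ⊢
    grind
  have sort_subset : (S ×ˢ T).image sort ⊆ ({q | q.1 < q.2} : Finset (ι × ι)) := by
    intro r hr
    obtain ⟨q, hq, rfl⟩ := mem_image.1 hr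
    simpa [sort, eq_comm] using ne hq
  calc decay B x ≤ ∏ q ∈ (S ×ˢ T).image sort, absCos (B (x q.1) (x q.2)) :=
        prod_anti_set_of_le_one (fun _ => absCos_nonneg _) (fun _ => absCos_le_one _) sort_subset
    _ = ∏ q ∈ S ×ˢ T, absCos (B (x q.1) (x q.2)) := by
        rw [prod_image sort_injOn]
        refine prod_congr rfl fun q _ => ?_
        obtain h | h := le_total q.1 q.2
        · simp only [sort, min_eq_left h, max_eq_right h]
        · simp only [sort, min_eq_right h, max_eq_left h, ← hsymm.eq (x q.1)]
    _ = ∏ i ∈ S, ∏ j ∈ T, absCos (B (x i) (x j)) := prod_product _ _ _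

lemma decay_le_prod_subtype (hsymm : B.IsSymm) (P : ι → Prop) [DecidablePred P] :
    decay B x ≤ ∏ i : {i // P i}, ∏ j : {i // ¬ P i}, absCos (B (x i) (x j)) := by
  refine (decay_le_prod_prod hsymm (disjoint_filter_filter_not univ univ P)).trans_eq ?_
  rw [prod_subtype (p := P) _ (fun i => by simp) _]
  exact prod_congr rfl fun i _ => prod_subtype (p := fun j => ¬ P j) _ (fun i => by simp) _

variable [Fintype V]

open Classical in
theorem sum_decay_not_almostOrthogonal_le (hp : p ≠ 2) (hsymm : B.IsSymm)
    (hB : B.SeparatingRight) {e : ℕ} (he : Fintype.card V * Real.exp (-(e : ℝ) / 16) < 1) {t : ℕ}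
    (ht : 4 * (2 / 3 : ℝ) ^ t ≤ 1) (P : ι → Prop) [DecidablePred P] {N : ℕ}
    (hN : N ≤ Fintype.card {i // P i}) (hN' : N ≤ Fintype.card {i // ¬ P i}) :
    ∑ x : ι → V with ¬ AlmostOrthogonal B e (fun i : {i // P i} => x i)
        (fun i : {i // ¬ P i} => x i), decay B x ≤
      (Fintype.card V : ℝ) ^ Fintype.card ι * Real.exp (-(e : ℝ) ^ 2 / (32 * 4 ^ t)) +
        2 ^ Fintype.card ι * (4 * (2 / 3 : ℝ) ^ t) ^ N *
          (Fintype.card V : ℝ) ^ (Fintype.card ι - N + 3 * e) := by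
  have card_add : Fintype.card {i // P i} + Fintype.card {i // ¬ P i} = Fintype.card ι := by
    rw [← Fintype.card_sum, Fintype.card_congr (Equiv.sumCompl P)]
  have bipartite := sum_prod_absCos_not_almostOrthogonal_le (ι := {i // P i}) (κ := {i // ¬ P i})
    hp hsymm hB he t (M := Fintype.card ι - N) (by omega) (by omega)
  rw [card_add] at bipartite
  calc _ ≤ ∑ x : ι → V with ¬ AlmostOrthogonal B e (fun i : {i // P i} => x i)
          (fun i : {i // ¬ P i} => x i), ∏ i : {i // P i}, ∏ j : {i // ¬ P i},
          absCos (B (x i) (x j)) := sum_le_sum fun x _ => decay_le_prod_subtype hsymm P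
    _ = ∑ a : {i // P i} → V, ∑ b : {i // ¬ P i} → V with ¬ AlmostOrthogonal B e a b,
          ∏ i, ∏ j, absCos (B (a i) (b j)) := by
        simp_rw [sum_filter]
        rw [← Fintype.sum_prod_type']
        exact Fintype.sum_equiv (Equiv.piEquivPiSubtypeProd P fun _ => V) _ _ fun _ => rfl
    _ ≤ _ := bipartite
    _ ≤ _ := by
        gcongr _ + _ * ?_ * _
        exact pow_le_pow_of_le_one (by positivity) ht hN'

open Classical in
lemma sum_absCos_orthogonal_le (hp : p ≠ 2) (hsymm : B.IsSymm) {W : Submodule (ZMod p) V} {y : V}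
    (hy : y ∉ B.orthogonal W) : ∑ v : W, absCos (B y v) ≤ 3 / 4 * Fintype.card W :=
  sum_absCos_linearMap_le hp (L := (B y).comp W.subtype) fun h0 => hy <|
    LinearMap.BilinForm.mem_orthogonal_iff.2 fun v hv =>
      (hsymm.eq v y).trans (LinearMap.congr_fun h0 ⟨v, hv⟩)

open Classical in
lemma sum_piFinset_prod_absCos_le (hp : p ≠ 2) (hsymm : B.IsSymm) {W : Submodule (ZMod p) V} {y : V}
    (hy : y ∉ B.orthogonal W) (X : Finset ι) :
    ∑ x ∈ Fintype.piFinset fun i => if i ∈ X then univ else univ.filter (· ∈ W),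
        ∏ j ∈ Xᶜ, absCos (B y (x j)) ≤
      (Fintype.card V : ℝ) ^ #X * (3 / 4 * Fintype.card W) ^ (Fintype.card ι - #X) := by
  have prod_eq (x : ι → V) :
      ∏ j ∈ Xᶜ, absCos (B y (x j)) = ∏ i, if i ∈ X then 1 else absCos (B y (x i)) := by
    rw [prod_ite, prod_const_one, one_mul]
    exact prod_congr (by ext; simp) fun _ _ => rfl
  simp_rw [prod_eq]
  rw [← prod_univ_sum _ fun i v => if i ∈ X then 1 else absCos (B y v)]
  calc _ ≤ ∏ i, if i ∈ X then (Fintype.card V : ℝ) else 3 / 4 * Fintype.card W := by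
        refine prod_le_prod (fun i _ => sum_nonneg fun v _ => ?_) fun i _ => ?_
        · split_ifs <;> simp [absCos_nonneg]
        · split_ifs
          · simp
          · rw [sum_subtype (p := (· ∈ W)) _ (by simp)]
            exact sum_absCos_orthogonal_le hp hsymm hy
    _ = _ := by
        rw [prod_ite, prod_const, prod_const, filter_not, card_sdiff, card_univ]
        simp

open Classical in
lemma sum_decay_exceptions_eq_le (hp : p ≠ 2) (hsymm : B.IsSymm) {W : Submodule (ZMod p) V}
    (hW : W = B.orthogonal W) {X : Finset ι} (hX : X.Nonempty) :
    ∑ x : ι → V with exceptions (fun _ => (W : Set V)) x = X, decay B x ≤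
      (Fintype.card V : ℝ) ^ (#X + 1) * (3 / 4 * Fintype.card W) ^ (Fintype.card ι - #X) := by
  obtain ⟨i₀, hi₀⟩ := hX
  let box := Fintype.piFinset fun i => if i ∈ X then univ else univ.filter (· ∈ W)
  have decay_le (x : ι → V) : decay B x ≤ ∏ j ∈ Xᶜ, absCos (B (x i₀) (x j)) := by
    simpa using decay_le_prod_prod (x := x) hsymm (S := {i₀}) (T := Xᶜ) (by simpa)
  have mem_box {x : ι → V} (hx : exceptions (fun _ => (W : Set V)) x = X) : x ∈ box := by
    refine Fintype.mem_piFinset.2 fun i => ?_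
    subst hx
    by_cases hi : x i ∈ W <;> simp [hi]
  have not_mem {x : ι → V} (hx : exceptions (fun _ => (W : Set V)) x = X) : x i₀ ∉ W :=
    mem_exceptions.1 (hx ▸ hi₀)
  calc _ ≤ ∑ x : ι → V with exceptions (fun _ => (W : Set V)) x = X,
          ∑ y with y ∉ W, ∏ j ∈ Xᶜ, absCos (B y (x j)) := by
        refine sum_le_sum fun x hx => (decay_le x).trans ?_
        exact single_le_sum (f := fun y => ∏ j ∈ Xᶜ, absCos (B y (x j)))
          (fun y _ => prod_nonneg fun _ _ => absCos_nonneg _)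
          (mem_filter.2 ⟨mem_univ _, not_mem (mem_filter.1 hx).2⟩)
    _ ≤ ∑ x ∈ box, ∑ y with y ∉ W, ∏ j ∈ Xᶜ, absCos (B y (x j)) :=
        sum_le_sum_of_subset_of_nonneg (fun x hx => mem_box (mem_filter.1 hx).2) fun _ _ _ =>
          sum_nonneg fun _ _ => prod_nonneg fun _ _ => absCos_nonneg _
    _ = ∑ y with y ∉ W, ∑ x ∈ box, ∏ j ∈ Xᶜ, absCos (B y (x j)) := sum_comm
    _ ≤ ∑ y : V with y ∉ W,
          (Fintype.card V : ℝ) ^ #X * (3 / 4 * Fintype.card W) ^ (Fintype.card ι - #X) :=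
        sum_le_sum fun y hy =>
          sum_piFinset_prod_absCos_le hp hsymm (hW ▸ (mem_filter.1 hy).2) X
    _ ≤ _ := by
        rw [sum_const, nsmul_eq_mul, pow_succ', mul_assoc]
        gcongr
        exact card_le_univ _

open Classical in
theorem sum_decay_nearly_lagrangian_le (hp : p ≠ 2) (hsymm : B.IsSymm) {W : Submodule (ZMod p) V}
    (hW : W = B.orthogonal W) (e : ℕ) :
    ∑ x : ι → V with (exceptions (fun _ => (W : Set V)) x).Nonempty ∧
        #(exceptions (fun _ => (W : Set V)) x) ≤ e, decay B x ≤
      4 ^ e * (5 / 4) ^ Fintype.card ι * ((Fintype.card V : ℝ) ^ (e + 1) *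
        Fintype.card W ^ Fintype.card ι * (3 / 4) ^ (Fintype.card ι - e)) := by
  have one_le_card_V : (1 : ℝ) ≤ Fintype.card V := by exact_mod_cast Fintype.card_pos
  have one_le_card_W : (1 : ℝ) ≤ Fintype.card W := by exact_mod_cast Fintype.card_pos
  calc _ = ∑ X : Finset ι with X.Nonempty ∧ #X ≤ e,
          ∑ x : ι → V with exceptions (fun _ => (W : Set V)) x = X, decay B x := by
        rw [← sum_fiberwise_of_maps_to (t := {X | X.Nonempty ∧ #X ≤ e})
          (g := exceptions fun _ => (W : Set V)) fun x hx => by simpa using hx]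
        refine sum_congr rfl fun X hX => sum_congr ?_ fun _ _ => rfl
        ext x
        simp only [mem_filter, mem_univ, true_and] at hX ⊢
        exact and_iff_right_of_imp fun h => h ▸ hX
    _ ≤ ∑ X : Finset ι with X.Nonempty ∧ #X ≤ e, (Fintype.card V : ℝ) ^ (e + 1) *
          Fintype.card W ^ Fintype.card ι * (3 / 4) ^ (Fintype.card ι - e) := by
        refine sum_le_sum fun X hX => ?_
        obtain ⟨-, X_nonempty, X_card⟩ := mem_filter.1 hX
        refine (sum_decay_exceptions_eq_le hp hsymm hW X_nonempty).trans ?_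
        rw [mul_pow, mul_comm ((3 / 4 : ℝ) ^ _), ← mul_assoc]
        gcongr ?_ * ?_ * ?_
        · exact pow_le_pow_right₀ one_le_card_V (by omega)
        · exact pow_le_pow_right₀ one_le_card_W (by omega)
        · exact pow_le_pow_of_le_one (by norm_num) (by norm_num) (by omega)
    _ ≤ _ := by
        rw [sum_const, nsmul_eq_mul]
        gcongr
        refine le_trans ?_ (card_filter_card_le_le e)
        gcongr
        exact fun h => h.2

end Decay

/-! ### Four pairwise orthogonal blocks -/

section Blocks

variable {p : ℕ} [Fact p.Prime] {V : Type*} [AddCommGroup V] [Module (ZMod p) V]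
  {B : LinearMap.BilinForm (ZMod p) V}

/-- The three ways `s` of halving four blocks; the half containing block `0` is `{0, s + 1}`. -/
def InHalf (s : Fin 3) (k : Fin 4) : Prop := k = 0 ∨ k = s.succ

instance (s : Fin 3) (k : Fin 4) : Decidable (InHalf s k) := instDecidableOr

open Classical in
/-- The subspace to which the vectors of block `k` are confined when, for each halving `s`, the half
containing block `0` lies in `(H s)^⊥` and the other half in `H s`. -/
def blockSpace (B : LinearMap.BilinForm (ZMod p) V) (H : Fin 3 → Submodule (ZMod p) V) (k : Fin 4) :
    Submodule (ZMod p) V :=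
  ⨅ s, if InHalf s k then B.orthogonal (H s) else H s

variable {H : Fin 3 → Submodule (ZMod p) V}

lemma mem_blockSpace {k : Fin 4} {v : V} : v ∈ blockSpace B H k ↔
    ∀ s, (InHalf s k → v ∈ B.orthogonal (H s)) ∧ (¬ InHalf s k → v ∈ H s) := by
  simp only [blockSpace, Submodule.mem_iInf]
  refine forall_congr' fun s => ?_
  by_cases h : InHalf s k <;> simp [h]

lemma blockSpace_le_orthogonal (hsymm : B.IsSymm) {k l : Fin 4} (hkl : k ≠ l) :
    blockSpace B H k ≤ B.orthogonal (blockSpace B H l) := by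
  have separated : ∀ k l : Fin 4, k ≠ l →
      ∃ s, InHalf s k ∧ ¬ InHalf s l ∨ ¬ InHalf s k ∧ InHalf s l := by decide
  intro v hv
  refine LinearMap.BilinForm.mem_orthogonal_iff.2 fun w hw => ?_
  rw [mem_blockSpace] at hv hw
  obtain ⟨s, ⟨hk, hl⟩ | ⟨hk, hl⟩⟩ := separated k l hkl
  · exact LinearMap.BilinForm.mem_orthogonal_iff.1 ((hv s).1 hk) w ((hw s).2 hl)
  · exact (hsymm.eq v w).symm.trans
      (LinearMap.BilinForm.mem_orthogonal_iff.1 ((hw s).1 hl) v ((hv s).2 hk))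

lemma exists_card_exceptions_blockSpace_le {ι : Type*} [Fintype ι] {lab : ι → Fin 4} {x : ι → V}
    {e : ℕ} (hx : ∀ s, AlmostOrthogonal B e (fun i : {i // InHalf s (lab i)} => x i)
      (fun i : {i // ¬ InHalf s (lab i)} => x i)) :
    ∃ H, #(exceptions (fun i => (blockSpace B H (lab i) : Set V)) x) ≤ 6 * e := by
  classical
  choose H h_orth h_mem using hx
  refine ⟨H, ?_⟩
  let bad (s : Fin 3) : Finset ι :=
    (exceptions (fun _ => (B.orthogonal (H s) : Set V)) fun i : {i // InHalf s (lab i)} => x i).map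
        (.subtype _) ∪
      (exceptions (fun _ => (H s : Set V)) fun i : {i // ¬ InHalf s (lab i)} => x i).map
        (.subtype _)
  have card_bad (s) : #(bad s) ≤ 2 * e := by
    refine (card_union_le _ _).trans ?_
    rw [card_map, card_map]
    linarith [h_orth s, h_mem s]
  have covered : exceptions (fun i => (blockSpace B H (lab i) : Set V)) x ⊆ univ.biUnion bad := by
    intro i hi
    rw [mem_exceptions, SetLike.mem_coe, mem_blockSpace] at hi
    by_contra h
    simp only [bad, mem_biUnion, mem_univ, true_and, mem_union, mem_map, mem_exceptions,
      SetLike.mem_coe, Function.Embedding.subtype_apply, not_exists, not_or] at h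
    exact hi fun s => ⟨fun hs => of_not_not fun hv => (h s).1 ⟨i, hs⟩ ⟨hv, rfl⟩,
      fun hs => of_not_not fun hv => (h s).2 ⟨i, hs⟩ ⟨hv, rfl⟩⟩
  calc _ ≤ ∑ s, #(bad s) := (card_le_card covered).trans card_biUnion_le
    _ ≤ ∑ _s : Fin 3, 2 * e := sum_le_sum fun s _ => card_bad s
    _ = 6 * e := by simp; ring

variable [Finite V]

theorem sum_finrank_lt_or_exists_lagrangian (hB : B.Nondegenerate)
    {W : Fin 4 → Submodule (ZMod p) V} (hW : ∀ k l, k ≠ l → W k ≤ B.orthogonal (W l)) :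
    ∑ k, Module.finrank (ZMod p) (W k) < 2 * Module.finrank (ZMod p) V ∨
      ∃ U, U = B.orthogonal U ∧ ∀ k, W k = U := by
  refine or_iff_not_imp_left.2 fun h => ?_
  rw [Fin.sum_univ_four, not_lt] at h
  have finrank_add_orthogonal (l) : Module.finrank (ZMod p) (W l) +
      Module.finrank (ZMod p) (B.orthogonal (W l)) = Module.finrank (ZMod p) V := by
    rw [LinearMap.BilinForm.finrank_orthogonal hB, Nat.add_sub_cancel' (W l).finrank_le]
  have pair (k l) (hkl : k ≠ l) : Module.finrank (ZMod p) (W l) + Module.finrank (ZMod p) (W k) ≤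
      Module.finrank (ZMod p) V :=
    (Nat.add_le_add_left (Submodule.finrank_mono (hW k l hkl)) _).trans_eq
      (finrank_add_orthogonal l)
  have W_eq (k l) (hkl : k ≠ l) : W k = B.orthogonal (W l) := by
    refine Submodule.eq_of_le_of_finrank_eq (hW k l hkl) ?_
    have := finrank_add_orthogonal l
    have := pair k l hkl
    have := pair 0 1 (by decide)
    have := pair 0 2 (by decide)
    have := pair 0 3 (by decide)
    have := pair 1 2 (by decide)
    have := pair 1 3 (by decide)
    have := pair 2 3 (by decide)
    fin_cases k <;> fin_cases l <;>
      dsimp only [Fin.zero_eta, Fin.mk_one, Fin.reduceFinMk] at * <;> first | contradiction | omega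
  have W_eq_zero (k) : W k = W 0 := by
    obtain ⟨l, hlk, hl0⟩ : ∃ l, k ≠ l ∧ 0 ≠ l := by decide +revert
    rw [W_eq k l hlk, W_eq 0 l hl0]
  exact ⟨W 0, (W_eq 0 1 (by decide)).trans (by rw [W_eq_zero 1]), W_eq_zero⟩

lemma card_submodule_le :
    Nat.card (Submodule (ZMod p) V) ≤ p ^ Module.finrank (ZMod p) V ^ 2 := by
  have range_surjective :
      Function.Surjective (LinearMap.range : (V →ₗ[ZMod p] V) → Submodule (ZMod p) V) := by
    intro W
    obtain ⟨g, hg⟩ := W.subtype.exists_leftInverse_of_injective W.ker_subtype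
    refine ⟨W.subtype ∘ₗ g, ?_⟩
    have range_g : LinearMap.range g = ⊤ :=
      LinearMap.range_eq_top.2 fun w => ⟨w, LinearMap.congr_fun hg w⟩
    rw [LinearMap.range_comp, range_g, Submodule.map_subtype_top]
  have : Finite (V →ₗ[ZMod p] V) := Module.finite_of_finite (ZMod p)
  calc _ ≤ Nat.card (V →ₗ[ZMod p] V) := Nat.card_le_card_of_surjective _ range_surjective
    _ = _ := by
      rw [Module.natCard_eq_pow_finrank (K := ZMod p), Module.finrank_linearMap, Nat.card_zmod, sq]

end Blocks

section Nonisotropic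

lemma sum_filter_exists_le {α β : Type*} [Fintype α] [Fintype β] {f : α → ℝ} (hf : ∀ a, 0 ≤ f a)
    {P : β → α → Prop} [∀ b, DecidablePred (P b)] [DecidablePred fun a => ∃ b, P b a] {c : ℝ}
    (hc : ∀ b, ∑ a with P b a, f a ≤ c) : ∑ a with ∃ b, P b a, f a ≤ Fintype.card β * c := by
  have nonneg (a : α) (b : β) : 0 ≤ if P b a then f a else 0 := by split_ifs <;> simp [hf]
  calc ∑ a with ∃ b, P b a, f a ≤ ∑ a, ∑ b, if P b a then f a else 0 := by
        rw [sum_filter]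
        refine sum_le_sum fun a _ => ?_
        split_ifs with h
        · obtain ⟨b, hb⟩ := h
          exact (if_pos hb).ge.trans (single_le_sum (f := fun b => if P b a then f a else 0)
            (fun b _ => nonneg a b) (mem_univ b))
        · exact sum_nonneg fun b _ => nonneg a b
    _ = ∑ b, ∑ a with P b a, f a := by
        simp_rw [sum_filter]
        exact sum_comm
    _ ≤ Fintype.card β * c := by
        rw [← nsmul_eq_mul]
        exact sum_le_card_nsmul univ _ _ fun b _ => hc b

variable {p : ℕ} [Fact p.Prime] {V : Type*} [AddCommGroup V] [Module (ZMod p) V] [Fintype V]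
  {B : LinearMap.BilinForm (ZMod p) V} {ι : Type*} [Fintype ι] [LinearOrder ι] {lab : ι → Fin 4}
  {x : ι → V} {e N : ℕ}

omit [LinearOrder ι] [Fintype V] in
lemma prod_ncard_le_pow [Finite V] (hlab : ∀ k, #{i | lab i = k} ≤ N)
    (W : Fin 4 → Submodule (ZMod p) V) :
    ∏ i, (W (lab i) : Set V).ncard ≤ p ^ (N * ∑ k, Module.finrank (ZMod p) (W k)) := by
  have ncard_eq (k) : (W k : Set V).ncard = p ^ Module.finrank (ZMod p) (W k) := by
    rw [← Nat.card_coe_set_eq, SetLike.coe_sort_coe, Module.natCard_eq_pow_finrank (K := ZMod p),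
      Nat.card_zmod]
  simp_rw [ncard_eq, prod_pow_eq_pow_sum]
  refine Nat.pow_le_pow_right (Fact.out : p.Prime).pos ?_
  rw [← sum_fiberwise' univ lab fun k => Module.finrank (ZMod p) (W k), mul_sum]
  refine sum_le_sum fun k _ => ?_
  rw [sum_const, smul_eq_mul]
  exact Nat.mul_le_mul_right _ (hlab k)

open Classical in
lemma card_exceptions_blockSpace_le (hlab : ∀ k, #{i | lab i = k} ≤ N)
    {H : Fin 3 → Submodule (ZMod p) V}
    (hH : ∑ k, Module.finrank (ZMod p) (blockSpace B H k) < 2 * Module.finrank (ZMod p) V) :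
    #{x : ι → V | #(exceptions (fun i => (blockSpace B H (lab i) : Set V)) x) ≤ e} ≤
      2 ^ Fintype.card ι *
        (Fintype.card V ^ e * p ^ (N * (2 * Module.finrank (ZMod p) V - 1))) := by
  refine (card_exceptions_le_le (fun i => (blockSpace B H (lab i)).nonempty) e).trans ?_
  gcongr
  refine (prod_ncard_le_pow hlab _).trans (Nat.pow_le_pow_right (Fact.out : p.Prime).pos ?_)
  exact Nat.mul_le_mul_left _ (by omega)

/-- All vectors of the tuple `x`, including equal ones, are `B`-orthogonal to each other. -/
def IsIsotropic (B : LinearMap.BilinForm (ZMod p) V) (x : ι → V) : Prop := ∀ i j, B (x i) (x j) = 0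

omit [LinearOrder ι] [Fintype V] in
open Classical in
lemma not_isotropic_cases [Finite V] (hsymm : B.IsSymm) (hB : B.Nondegenerate)
    (lab : ι → Fin 4) (e : ℕ) (hx : ¬ IsIsotropic B x) :
    (∃ s, ¬ AlmostOrthogonal B e (fun i : {i // InHalf s (lab i)} => x i)
        (fun i : {i // ¬ InHalf s (lab i)} => x i)) ∨
      (∃ H, ∑ k, Module.finrank (ZMod p) (blockSpace B H k) < 2 * Module.finrank (ZMod p) V ∧
        #(exceptions (fun i => (blockSpace B H (lab i) : Set V)) x) ≤ 6 * e) ∨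
      ∃ U : Submodule (ZMod p) V, U = B.orthogonal U ∧
        (exceptions (fun _ => (U : Set V)) x).Nonempty ∧
          #(exceptions (fun _ => (U : Set V)) x) ≤ 6 * e := by
  refine or_iff_not_imp_left.2 fun h => ?_
  push Not at h
  obtain ⟨H, card_le⟩ := exists_card_exceptions_blockSpace_le h
  obtain lt | ⟨U, hU, eq_U⟩ := sum_finrank_lt_or_exists_lagrangian hB
    (W := blockSpace B H) fun k l => blockSpace_le_orthogonal hsymm
  · exact Or.inl ⟨H, lt, card_le⟩
  refine Or.inr ⟨U, hU, ?_, by simpa only [eq_U] using card_le⟩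
  by_contra empty
  have mem (i) : x i ∈ U := by
    by_contra hi
    exact empty ⟨i, mem_exceptions.2 hi⟩
  exact hx fun i j => LinearMap.BilinForm.mem_orthogonal_iff.1 (hU ▸ mem j) (x i) (mem i)

omit [LinearOrder ι] [Fintype V] in
lemma two_mul_le_card_subtype (hlab : ∀ k, N ≤ #{i | lab i = k}) {P : Fin 4 → Prop}
    [DecidablePred P] {k l : Fin 4} (hkl : k ≠ l) (hk : P k) (hl : P l) :
    2 * N ≤ Fintype.card {i // P (lab i)} := by
  have disjoint : Disjoint (univ.filter fun i => lab i = k) (univ.filter fun i => lab i = l) :=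
    disjoint_filter.2 fun i _ h h' => hkl (h.symm.trans h')
  calc 2 * N ≤ #(univ.filter fun i => lab i = k) + #(univ.filter fun i => lab i = l) := by
        linarith [hlab k, hlab l]
    _ ≤ #{i | P (lab i)} := by
        classical
        rw [← card_union_of_disjoint disjoint]
        refine card_le_card (union_subset ?_ ?_) <;> intro i hi <;> simp_all
    _ = _ := (Fintype.card_subtype _).symm

open Classical in
lemma sum_decay_exists_not_almostOrthogonal_le (hp : p ≠ 2) (hsymm : B.IsSymm)
    (hB : B.SeparatingRight) (he : Fintype.card V * Real.exp (-(e : ℝ) / 16) < 1) {t : ℕ}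
    (ht : 4 * (2 / 3 : ℝ) ^ t ≤ 1) (hlab : ∀ k, N ≤ #{i | lab i = k}) :
    ∑ x : ι → V with ∃ s, ¬ AlmostOrthogonal B e (fun i : {i // InHalf s (lab i)} => x i)
        (fun i : {i // ¬ InHalf s (lab i)} => x i), decay B x ≤
      3 * ((Fintype.card V : ℝ) ^ Fintype.card ι * Real.exp (-(e : ℝ) ^ 2 / (32 * 4 ^ t)) +
        2 ^ Fintype.card ι * (4 * (2 / 3 : ℝ) ^ t) ^ (2 * N) *
          (Fintype.card V : ℝ) ^ (Fintype.card ι - 2 * N + 3 * e)) := by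
  have other : ∀ s, ∃ k l, k ≠ l ∧ ¬ InHalf s k ∧ ¬ InHalf s l := by decide
  have half_le (s : Fin 3) :
      ∑ x : ι → V with ¬ AlmostOrthogonal B e (fun i : {i // InHalf s (lab i)} => x i)
          (fun i : {i // ¬ InHalf s (lab i)} => x i), decay B x ≤
        (Fintype.card V : ℝ) ^ Fintype.card ι * Real.exp (-(e : ℝ) ^ 2 / (32 * 4 ^ t)) +
          2 ^ Fintype.card ι * (4 * (2 / 3 : ℝ) ^ t) ^ (2 * N) *
            (Fintype.card V : ℝ) ^ (Fintype.card ι - 2 * N + 3 * e) := by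
    obtain ⟨k, l, hkl, hk, hl⟩ := other s
    exact sum_decay_not_almostOrthogonal_le hp hsymm hB he ht (fun i => InHalf s (lab i))
      (two_mul_le_card_subtype (P := InHalf s) hlab (Fin.succ_ne_zero s).symm (.inl rfl) (.inr rfl))
      (two_mul_le_card_subtype (P := (¬ InHalf s ·)) hlab hkl hk hl)
  exact (sum_filter_exists_le (fun _ => decay_nonneg) half_le).trans_eq
    (by rw [Fintype.card_fin, Nat.cast_ofNat])

open Classical in
lemma sum_decay_exists_blockSpace_le (hlab : ∀ k, #{i | lab i = k} ≤ N) :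
    ∑ x : ι → V with ∃ H,
        ∑ k, Module.finrank (ZMod p) (blockSpace B H k) < 2 * Module.finrank (ZMod p) V ∧
          #(exceptions (fun i => (blockSpace B H (lab i) : Set V)) x) ≤ e, decay B x ≤
      (p : ℝ) ^ (3 * Module.finrank (ZMod p) V ^ 2) * (2 ^ Fintype.card ι *
        ((Fintype.card V : ℝ) ^ e * p ^ (N * (2 * Module.finrank (ZMod p) V - 1)))) := by
  let D := Module.finrank (ZMod p) V
  have count (H : Fin 3 → Submodule (ZMod p) V) :
      ∑ x : ι → V with ∑ k, Module.finrank (ZMod p) (blockSpace B H k) < 2 * D ∧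
          #(exceptions (fun i => (blockSpace B H (lab i) : Set V)) x) ≤ e, decay B x ≤
        2 ^ Fintype.card ι * ((Fintype.card V : ℝ) ^ e * p ^ (N * (2 * D - 1))) := by
    by_cases hH : ∑ k, Module.finrank (ZMod p) (blockSpace B H k) < 2 * D
    · refine (sum_le_card_nsmul _ _ 1 fun x _ => decay_le_one).trans ?_
      simp only [hH, true_and, nsmul_one]
      exact_mod_cast card_exceptions_blockSpace_le hlab hH
    · simp only [hH, false_and, filter_false, sum_empty]
      positivity
  refine (sum_filter_exists_le (fun _ => decay_nonneg) count).trans ?_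
  gcongr
  rw [Fintype.card_fun, Fintype.card_fin, Nat.mul_comm 3, pow_mul]
  have := card_submodule_le (p := p) (V := V)
  rw [Nat.card_eq_fintype_card] at this
  exact_mod_cast Nat.pow_le_pow_left this 3

omit [Fintype V] in
lemma card_lagrangian [Finite V] (hB : B.Nondegenerate) {U : Submodule (ZMod p) V} [Fintype U]
    (hU : U = B.orthogonal U) :
    Fintype.card U = p ^ (Module.finrank (ZMod p) V / 2) := by
  have finrank_orthogonal := LinearMap.BilinForm.finrank_orthogonal hB U
  have finrank_le := U.finrank_le
  rw [← hU] at finrank_orthogonal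
  rw [Module.card_eq_pow_finrank (K := ZMod p), ZMod.card]
  congr 1
  omega

open Classical in
lemma sum_decay_exists_lagrangian_le (hp : p ≠ 2) (hsymm : B.IsSymm) (hB : B.Nondegenerate) :
    ∑ x : ι → V with ∃ U : Submodule (ZMod p) V, U = B.orthogonal U ∧
        (exceptions (fun _ => (U : Set V)) x).Nonempty ∧
          #(exceptions (fun _ => (U : Set V)) x) ≤ e, decay B x ≤
      (p : ℝ) ^ Module.finrank (ZMod p) V ^ 2 * (4 ^ e * (5 / 4) ^ Fintype.card ι *
        ((Fintype.card V : ℝ) ^ (e + 1) *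
          ((p : ℝ) ^ (Module.finrank (ZMod p) V / 2)) ^ Fintype.card ι *
            (3 / 4) ^ (Fintype.card ι - e))) := by
  have count (U : Submodule (ZMod p) V) :
      ∑ x : ι → V with U = B.orthogonal U ∧ (exceptions (fun _ => (U : Set V)) x).Nonempty ∧
          #(exceptions (fun _ => (U : Set V)) x) ≤ e, decay B x ≤
        4 ^ e * (5 / 4) ^ Fintype.card ι * ((Fintype.card V : ℝ) ^ (e + 1) *
          ((p : ℝ) ^ (Module.finrank (ZMod p) V / 2)) ^ Fintype.card ι *
            (3 / 4) ^ (Fintype.card ι - e)) := by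
    by_cases hU : U = B.orthogonal U
    · simp only [← hU, true_and]
      refine (sum_decay_nearly_lagrangian_le hp hsymm hU e).trans_eq ?_
      rw [card_lagrangian hB hU, Nat.cast_pow]
    · simp only [hU, false_and, filter_false, sum_empty]
      positivity
  refine (sum_filter_exists_le (fun _ => decay_nonneg) count).trans ?_
  gcongr
  have := card_submodule_le (p := p) (V := V)
  rw [Nat.card_eq_fintype_card] at this
  exact_mod_cast this

open Classical in
theorem sum_decay_not_isotropic_le (hp : p ≠ 2) (hsymm : B.IsSymm) (hB : B.Nondegenerate)
    (he : Fintype.card V * Real.exp (-(e : ℝ) / 16) < 1) {t : ℕ} (ht : 4 * (2 / 3 : ℝ) ^ t ≤ 1)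
    {q : ℕ} (hq : ∀ k, q ≤ #{i | lab i = k}) (hN : ∀ k, #{i | lab i = k} ≤ N) :
    ∑ x : ι → V with ¬ IsIsotropic B x, decay B x ≤
      3 * ((Fintype.card V : ℝ) ^ Fintype.card ι * Real.exp (-(e : ℝ) ^ 2 / (32 * 4 ^ t)) +
        2 ^ Fintype.card ι * (4 * (2 / 3 : ℝ) ^ t) ^ (2 * q) *
          (Fintype.card V : ℝ) ^ (Fintype.card ι - 2 * q + 3 * e)) +
      ((p : ℝ) ^ (3 * Module.finrank (ZMod p) V ^ 2) * (2 ^ Fintype.card ι *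
        ((Fintype.card V : ℝ) ^ (6 * e) * p ^ (N * (2 * Module.finrank (ZMod p) V - 1)))) +
      (p : ℝ) ^ Module.finrank (ZMod p) V ^ 2 * (4 ^ (6 * e) * (5 / 4) ^ Fintype.card ι *
        ((Fintype.card V : ℝ) ^ (6 * e + 1) *
          ((p : ℝ) ^ (Module.finrank (ZMod p) V / 2)) ^ Fintype.card ι *
            (3 / 4) ^ (Fintype.card ι - 6 * e)))) := by
  have union_le (P Q : (ι → V) → Prop) [DecidablePred P] [DecidablePred Q] :
      ∑ x with P x ∨ Q x, decay B x ≤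
        ∑ x with P x, decay B x + ∑ x with Q x, decay B x := by
    rw [filter_or, ← sum_union_inter]
    exact le_add_of_nonneg_right (sum_nonneg fun _ _ => decay_nonneg)
  refine (sum_le_sum_of_subset_of_nonneg (monotone_filter_right _ fun x _ hx =>
    not_isotropic_cases hsymm hB lab e hx) fun _ _ _ => decay_nonneg).trans ?_
  refine (union_le _ _).trans (add_le_add ?_ ?_)
  · exact sum_decay_exists_not_almostOrthogonal_le hp hsymm hB.2 he ht hq
  refine (union_le _ _).trans (add_le_add ?_ ?_)
  · exact sum_decay_exists_blockSpace_le hN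
  · exact sum_decay_exists_lagrangian_le hp hsymm hB

end Nonisotropic

/-! ### Choice of parameters -/

lemma card_filter_ofNat_eq (n r : ℕ) [NeZero r] (k : Fin r) :
    #{i : Fin n | Fin.ofNat r i = k} = n / r + if k < n % r then 1 else 0 := by
  have ofNat_eq_iff (i : ℕ) : Fin.ofNat r i = k ↔ i ≡ k [MOD r] := by
    rw [Fin.ext_iff, Fin.val_ofNat, Nat.ModEq, Nat.mod_eq_of_lt k.2]
  simp_rw [ofNat_eq_iff]
  have count := Nat.count_modEq_card n (NeZero.pos r) k
  rw [Nat.mod_eq_of_lt k.2, Nat.count_eq_card_filter_range] at count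
  rw [← count, card_filter, card_filter, ← Fin.sum_univ_eq_sum_range fun i => ite _ _ _]

section Numerics

variable {L : ℝ} {m n e : ℕ}

lemma exists_threshold (hL : 100 ≤ L) (hn : 10 ^ 20 * L ^ 4 ≤ n) :
    ∃ e : ℕ, L * e ≤ n / 2000 ∧ 4 * n * L ≤ (e : ℝ) ^ 2 / (32 * 4 ^ 12) ∧ 100 * L ≤ e := by
  have L_pos : 0 < L := by linarith
  have one_le_cube : 1 ≤ L ^ 3 := one_le_pow₀ (by linarith)
  have n_ge : 10 ^ 20 * L ^ 3 * L ≤ n := by linarith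
  have n_ge_linear : 10 ^ 20 * L ≤ n := by nlinarith
  obtain ⟨e, he⟩ : ∃ e, e = ⌊(n : ℝ) / (2000 * L)⌋₊ := ⟨_, rfl⟩
  have e_le : L * e ≤ n / 2000 := by
    have : (e : ℝ) ≤ n / (2000 * L) := he ▸ Nat.floor_le (by positivity)
    rw [le_div_iff₀ (by positivity)] at this
    linarith
  have le_e : n ≤ 4000 * L * e := by
    have : (n : ℝ) / (2000 * L) < e + 1 := he ▸ Nat.lt_floor_add_one _
    rw [div_lt_iff₀ (by positivity)] at this
    linarith
  refine ⟨e, e_le, ?_, ?_⟩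
  · rw [le_div_iff₀ (by positivity)]
    refine le_of_mul_le_mul_left ?_ (pow_pos L_pos 2)
    have : (n : ℝ) * (10 ^ 20 * L ^ 3 * L) ≤ (4000 * L * e) ^ 2 :=
      (mul_le_mul_of_nonneg_left n_ge (by positivity)).trans (by nlinarith)
    nlinarith [show (0 : ℝ) ≤ n * L ^ 3 by positivity]
  · refine le_of_mul_le_mul_left ?_ (by positivity : 0 < 4000 * L)
    nlinarith

lemma four_le_exp_two : (4 : ℝ) ≤ Real.exp 2 := by
  have := Real.quadratic_le_exp_of_nonneg (show (0 : ℝ) ≤ 2 by norm_num)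
  linarith

lemma energy_term_le (hL : 100 ≤ L) (hm : m ≤ 2) (hn : 10 ^ 6 * L ≤ n)
    (he : 4 * n * L ≤ (e : ℝ) ^ 2 / (32 * 4 ^ 12)) :
    3 * ((Real.exp L ^ (2 * m)) ^ n * Real.exp (-(e : ℝ) ^ 2 / (32 * 4 ^ 12))) ≤
      Real.exp (m * n * L - L - 2) := by
  calc _ ≤ Real.exp 2 * ((Real.exp L ^ (2 * m)) ^ n * Real.exp (-(4 * n * L))) := by
        gcongr
        · linarith [four_le_exp_two]
        · linarith
    _ = Real.exp (2 + 2 * m * n * L - 4 * n * L) := by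
        simp only [← Real.exp_nat_mul, ← Real.exp_add]
        congr 1
        push_cast
        ring
    _ ≤ _ := by
        refine Real.exp_le_exp.2 ?_
        have : (m : ℝ) * (n * L) ≤ 2 * (n * L) := by gcongr; exact_mod_cast hm
        nlinarith

lemma two_pow_mul_le {q : ℕ} (hn : n ≤ 4 * q + 3) :
    2 ^ n * (4 * (2 / 3 : ℝ) ^ 12) ^ (2 * q) ≤ 8 * Real.exp (-4 * q) := by
  calc 2 ^ n * (4 * (2 / 3 : ℝ) ^ 12) ^ (2 * q)
      ≤ 2 ^ (4 * q + 3) * (4 * (2 / 3 : ℝ) ^ 12) ^ (2 * q) := by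
        gcongr
        norm_num
    _ = 8 * (16 * (2 / 3 : ℝ) ^ 12) ^ (2 * q) := by
        rw [pow_add, show 4 * q = 2 * (2 * q) by ring, pow_mul, mul_right_comm, ← mul_pow]
        norm_num [mul_comm]
    _ ≤ 8 * Real.exp (-2) ^ (2 * q) := by
        gcongr
        rw [Real.exp_neg, ← inv_inv (16 * _)]
        refine inv_anti₀ (Real.exp_pos _) ?_
        have : Real.exp 2 = Real.exp 1 ^ 2 := by rw [← Real.exp_nat_mul]; norm_num
        rw [this]
        nlinarith [Real.exp_one_lt_d9, Real.exp_pos 1]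
    _ = 8 * Real.exp (-4 * q) := by
        rw [← Real.exp_nat_mul]
        push_cast
        ring_nf

lemma counting_term_le (hL : 100 ≤ L) (hm : m ≤ 2) (hn : 10 ^ 6 * L ≤ n)
    (he : L * e ≤ n / 2000) :
    3 * (2 ^ n * (4 * (2 / 3 : ℝ) ^ 12) ^ (2 * (n / 4)) *
      (Real.exp L ^ (2 * m)) ^ (n - 2 * (n / 4) + 3 * e)) ≤ Real.exp (m * n * L - L - 2) := by
  obtain ⟨q, hq⟩ : ∃ q, q = n / 4 := ⟨_, rfl⟩
  rw [← hq]
  have n_le : n ≤ 4 * q + 3 := by omega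
  have cast_n_le : (n : ℝ) ≤ 4 * q + 3 := by exact_mod_cast n_le
  have sub_le : ((n - 2 * q : ℕ) : ℝ) ≤ (n + 3) / 2 := by
    rw [Nat.cast_sub (by omega)]
    push_cast
    linarith
  calc _ ≤ Real.exp 2 * ((Real.exp 2 * Real.exp 2) * Real.exp (-4 * q) *
          (Real.exp L ^ (2 * m)) ^ (n - 2 * q + 3 * e)) := by
        gcongr ?_ * (?_ * _)
        · linarith [four_le_exp_two]
        · refine (two_pow_mul_le n_le).trans ?_
          gcongr
          nlinarith [four_le_exp_two]
    _ = Real.exp (6 - 4 * q + 2 * m * (((n - 2 * q : ℕ) : ℝ) * L + 3 * (L * e))) := by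
        simp only [← Real.exp_nat_mul, ← Real.exp_add]
        congr 1
        push_cast
        ring
    _ ≤ Real.exp (6 - 4 * q + 2 * m * ((n + 3) / 2 * L + 3 * (n / 2000))) := by gcongr
    _ ≤ _ := by
        refine Real.exp_le_exp.2 ?_
        have : (m : ℝ) ≤ 2 := by exact_mod_cast hm
        nlinarith

lemma blockSpace_term_le (hL : 100 ≤ L) (hm : m = 1 ∨ m = 2) (hn : 10 ^ 6 * L ≤ n)
    (he : L * e ≤ n / 2000) :
    Real.exp L ^ (3 * (2 * m) ^ 2) * (2 ^ n * ((Real.exp L ^ (2 * m)) ^ (6 * e) *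
      Real.exp L ^ ((n / 4 + 1) * (2 * (2 * m) - 1)))) ≤ Real.exp (m * n * L - L - 2) := by
  obtain ⟨q, hq⟩ : ∃ q, q = n / 4 := ⟨_, rfl⟩
  rw [← hq]
  have q_le : q * L ≤ n / 4 * L := by
    gcongr
    rw [le_div_iff₀ (by norm_num)]
    exact_mod_cast (by omega : q * 4 ≤ n)
  have two_pow_le : (2 : ℝ) ^ n ≤ Real.exp n := by
    rw [← mul_one (n : ℝ), Real.exp_nat_mul]
    gcongr
    linarith [Real.add_one_le_exp 1]
  have cast_sub : ((2 * (2 * m) - 1 : ℕ) : ℝ) = 4 * m - 1 := by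
    rcases hm with rfl | rfl <;> norm_num
  calc _ ≤ Real.exp L ^ (3 * (2 * m) ^ 2) * (Real.exp n * ((Real.exp L ^ (2 * m)) ^ (6 * e) *
          Real.exp L ^ ((q + 1) * (2 * (2 * m) - 1)))) := by gcongr
    _ = Real.exp (12 * m ^ 2 * L + n + 12 * m * (L * e) + (q * L + L) * (4 * m - 1)) := by
        simp only [← Real.exp_nat_mul, ← Real.exp_add]
        congr 1
        push_cast [cast_sub]
        ring
    _ ≤ _ := by
        refine Real.exp_le_exp.2 ?_
        have : 100 * (n : ℝ) ≤ n * L := by nlinarith [Nat.cast_nonneg (α := ℝ) n]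
        rcases hm with rfl | rfl <;> push_cast <;> nlinarith

lemma four_pow_mul_le (a k : ℕ) :
    (4 : ℝ) ^ a * ((5 / 4) ^ (a + k) * (3 / 4) ^ k) ≤ Real.exp (3 * a) * Real.exp (-k / 16) := by
  calc (4 : ℝ) ^ a * ((5 / 4) ^ (a + k) * (3 / 4) ^ k) = 5 ^ a * (15 / 16) ^ k := by
        rw [pow_add, mul_assoc, ← mul_pow, ← mul_assoc, ← mul_pow]
        norm_num
    _ ≤ Real.exp 3 ^ a * Real.exp (-1 / 16) ^ k := by
        gcongr
        · linarith [Real.quadratic_le_exp_of_nonneg (show (0 : ℝ) ≤ 3 by norm_num)]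
        · linarith [Real.add_one_le_exp (-1 / 16)]
    _ = Real.exp (3 * a) * Real.exp (-k / 16) := by
        simp only [← Real.exp_nat_mul]
        ring_nf

lemma lagrangian_term_le (hL : 100 ≤ L) (hm : m = 1 ∨ m = 2) (hn : 10 ^ 6 * L ≤ n)
    (he : L * e ≤ n / 2000) :
    Real.exp L ^ (2 * m) ^ 2 * (4 ^ (6 * e) * (5 / 4) ^ n * ((Real.exp L ^ (2 * m)) ^ (6 * e + 1) *
      (Real.exp L ^ m) ^ n * (3 / 4) ^ (n - 6 * e))) ≤ Real.exp (m * n * L - L - 2) := by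
  have e_le : 100 * (e : ℝ) ≤ n / 2000 := by nlinarith [Nat.cast_nonneg (α := ℝ) e]
  have six_mul_le : 6 * e ≤ n := by
    have : ((6 * e : ℕ) : ℝ) ≤ n := by push_cast; linarith
    exact_mod_cast this
  obtain ⟨k, rfl⟩ := Nat.exists_eq_add_of_le six_mul_le
  rw [Nat.add_sub_cancel_left]
  calc _ = Real.exp L ^ (2 * m) ^ 2 * ((Real.exp L ^ (2 * m)) ^ (6 * e + 1) *
          (Real.exp L ^ m) ^ (6 * e + k) *
            (4 ^ (6 * e) * ((5 / 4) ^ (6 * e + k) * (3 / 4) ^ k))) := by ring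
    _ ≤ Real.exp L ^ (2 * m) ^ 2 * ((Real.exp L ^ (2 * m)) ^ (6 * e + 1) *
          (Real.exp L ^ m) ^ (6 * e + k) *
            (Real.exp (3 * (6 * e : ℕ)) * Real.exp (-k / 16))) := by
        gcongr _ * (_ * ?_)
        exact four_pow_mul_le _ _
    _ = Real.exp (4 * m ^ 2 * L + 2 * m * (6 * (L * e) + L) + m * (6 * e + k) * L +
          18 * e - k / 16) := by
        simp only [← Real.exp_nat_mul, ← Real.exp_add]
        congr 1
        push_cast
        ring
    _ ≤ _ := by
        refine Real.exp_le_exp.2 ?_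
        push_cast at hn he e_le ⊢
        rcases hm with rfl | rfl <;> push_cast <;> nlinarith

lemma ne_two_of_le_log {p : ℕ} (hlog : 100 ≤ Real.log p) : p ≠ 2 := by
  rintro rfl
  rw [Nat.cast_ofNat] at hlog
  linarith [Real.log_two_lt_d9]

end Numerics

open Classical in
theorem sum_decay_not_isotropic_le_div {p : ℕ} [Fact p.Prime] {V : Type*} [AddCommGroup V]
    [Module (ZMod p) V] [Fintype V] {B : LinearMap.BilinForm (ZMod p) V} (hsymm : B.IsSymm)
    (hB : B.Nondegenerate) {m n : ℕ} (hm : m = 1 ∨ m = 2)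
    (finrank_V : Module.finrank (ZMod p) V = 2 * m) (hlog : 100 ≤ Real.log p)
    (hn : 10 ^ 20 * Real.log p ^ 4 ≤ n) :
    ∑ x : Fin n → V with ¬ IsIsotropic B x, decay B x ≤ (p : ℝ) ^ (m * n) / p := by
  have p_ne_two := ne_two_of_le_log hlog
  obtain ⟨L, hL⟩ : ∃ L, L = Real.log p := ⟨_, rfl⟩
  rw [← hL] at hlog hn
  have p_eq : (p : ℝ) = Real.exp L := by
    rw [hL, Real.exp_log (Nat.cast_pos.2 (Fact.out : p.Prime).pos)]
  have n_ge : 10 ^ 6 * L ≤ n := by nlinarith [one_le_pow₀ (n := 3) (show 1 ≤ L by linarith)]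
  obtain ⟨e, e_le, energy_le, le_e⟩ := exists_threshold hlog hn
  have card_V : (Fintype.card V : ℝ) = Real.exp L ^ (2 * m) := by
    rw [Module.card_eq_pow_finrank (K := ZMod p), ZMod.card, finrank_V, Nat.cast_pow, p_eq]
  have m_le : m ≤ 2 := by omega
  have sampling : Fintype.card V * Real.exp (-(e : ℝ) / 16) < 1 := by
    rw [card_V, ← Real.exp_nat_mul, ← Real.exp_add, Real.exp_lt_one_iff]
    have : (m : ℝ) * L ≤ 2 * L := by gcongr; exact_mod_cast m_le
    push_cast
    linarith
  have bound := sum_decay_not_isotropic_le (lab := fun i : Fin n => Fin.ofNat 4 i) (t := 12)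
    (q := n / 4) (N := n / 4 + 1) p_ne_two hsymm hB sampling (by norm_num)
    (fun k => by rw [card_filter_ofNat_eq]; omega)
    (fun k => by rw [card_filter_ofNat_eq]; split_ifs <;> omega)
  rw [Fintype.card_fin, finrank_V, Nat.mul_div_cancel_left m two_pos, card_V, p_eq,
    mul_add] at bound
  refine bound.trans ?_
  calc _ ≤ 4 * Real.exp (m * n * L - L - 2) := by
        linarith [energy_term_le hlog m_le n_ge energy_le, counting_term_le hlog m_le n_ge e_le,
          blockSpace_term_le hlog hm n_ge e_le, lagrangian_term_le hlog hm n_ge e_le]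
    _ ≤ Real.exp 2 * Real.exp (m * n * L - L - 2) := by gcongr; exact four_le_exp_two
    _ = _ := by
        rw [p_eq, ← Real.exp_nat_mul, ← Real.exp_add, ← Real.exp_sub]
        congr 1
        push_cast
        ring

/-! ### Fourier analysis of random symmetric sign matrices -/

open scoped BigOperators Matrix

lemma prob_eq_expect {Ω : Type*} [Fintype Ω] (E : Ω → Prop) [DecidablePred E] :
    prob E = 𝔼 ω, if E ω then (1 : ℝ) else 0 := by
  rw [Fintype.expect_eq_sum_div_card, prob, natCast_card_filter]
  congr!

lemma expect_prod_pi {ι κ : Type*} [Fintype ι] [DecidableEq ι] [Fintype κ] (g : ι → κ → ℂ) :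
    𝔼 ω : ι → κ, ∏ i, g i (ω i) = ∏ i, 𝔼 k, g i k := by
  simp only [Fintype.expect_eq_sum_div_card, ← Fintype.prod_sum, prod_div_distrib, prod_const,
    Fintype.card_fun, card_univ, Nat.cast_pow]

lemma addChar_sum {A ι : Type*} [AddCommMonoid A] (ψ : AddChar A ℂ) (s : Finset ι) (f : ι → A) :
    ψ (∑ i ∈ s, f i) = ∏ i ∈ s, ψ (f i) :=
  map_prod ψ.toMonoidHom (fun i => Multiplicative.ofAdd (f i)) s

section CharFun

variable {p : ℕ} [Fact p.Prime] {n : ℕ}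

lemma norm_expect_signb (c : ZMod p) :
    ‖𝔼 b : Bool, ZMod.stdAddChar (signb (ZMod p) b * c)‖ = absCos c := by
  have sum_eq : ∑ b : Bool, ZMod.stdAddChar (signb (ZMod p) b * c) =
      ((2 * (ZMod.stdAddChar c).re : ℝ) : ℂ) := by
    simp [signb, AddChar.map_neg_eq_conj, Complex.add_conj]
  rw [Fintype.expect_eq_sum_div_card, sum_eq, norm_div, Complex.norm_real, Fintype.card_bool]
  simp [absCos]

lemma trace_symMat_mul {R : Type*} [CommRing R] (ω : Fin n → Fin n → Bool)
    (S : Matrix (Fin n) (Fin n) R) :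
    (symMat R ω * S).trace = ∑ i, ∑ j, signb R (ω i j) *
      (if i < j then S i j + S j i else if i = j then S i j else 0) := by
  have entry (i j : Fin n) : symMat R ω i j * S j i =
      (if i < j then signb R (ω i j) * S j i else 0) +
        (if i = j then signb R (ω i j) * S i j else 0) +
        (if j < i then signb R (ω j i) * S j i else 0) := by
    obtain h | rfl | h := lt_trichotomy i j
    · simp [symMat, h, h.le, h.ne, h.not_gt]
    · simp [symMat]
    · simp [symMat, h, h.le, h.ne', h.not_gt]
  simp only [Matrix.trace, Matrix.diag_apply, Matrix.mul_apply, entry, sum_add_distrib]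
  rw [sum_comm (f := fun i j => if j < i then signb R (ω j i) * S j i else 0)]
  simp only [← sum_add_distrib]
  refine sum_congr rfl fun i _ => sum_congr rfl fun j _ => ?_
  obtain h | rfl | h := lt_trichotomy i j
  · simp [h, h.ne]
    ring
  · simp
  · simp [h.ne', h.not_gt]

/-- The characteristic function of the random matrix `symMat (ZMod p) ω - A` at the frequency `S`,
with respect to the trace pairing. -/
def symMatCharFun (A S : Matrix (Fin n) (Fin n) (ZMod p)) : ℂ :=
  𝔼 ω, ZMod.stdAddChar ((symMat (ZMod p) ω - A) * S).trace

lemma symMatCharFun_zero (A : Matrix (Fin n) (Fin n) (ZMod p)) : symMatCharFun A 0 = 1 := by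
  simp only [symMatCharFun, Matrix.mul_zero, Matrix.trace_zero, AddChar.map_zero_eq_one,
    Fintype.expect_const]

lemma norm_symMatCharFun_le (A S : Matrix (Fin n) (Fin n) (ZMod p)) :
    ‖symMatCharFun A S‖ ≤ ∏ q : Fin n × Fin n with q.1 < q.2, absCos (S q.1 q.2 + S q.2 q.1) := by
  let c (i j : Fin n) : ZMod p := if i < j then S i j + S j i else if i = j then S i j else 0
  have factor : symMatCharFun A S = (∏ i, ∏ j, 𝔼 b, ZMod.stdAddChar (signb (ZMod p) b * c i j)) *
      ZMod.stdAddChar (-(A * S).trace) := by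
    simp only [symMatCharFun, Matrix.sub_mul, Matrix.trace_sub, trace_symMat_mul]
    simp only [sub_eq_add_neg, AddChar.map_add_eq_mul, addChar_sum]
    rw [← expect_mul]
    refine congrArg (· * _) ((expect_prod_pi fun i (w : Fin n → Bool) =>
      ∏ j, ZMod.stdAddChar (signb (ZMod p) (w j) * c i j)).trans (prod_congr rfl fun i _ => ?_))
    exact expect_prod_pi fun j b => ZMod.stdAddChar (signb (ZMod p) b * c i j)
  rw [factor, norm_mul, AddChar.norm_apply, mul_one, norm_prod]
  simp only [norm_prod, norm_expect_signb]
  rw [← Fintype.prod_prod_type' fun i j => absCos (c i j)]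
  calc ∏ q : Fin n × Fin n, absCos (c q.1 q.2)
      ≤ ∏ q : Fin n × Fin n with q.1 < q.2, absCos (c q.1 q.2) :=
        prod_anti_set_of_le_one (fun _ => absCos_nonneg _) (fun _ => absCos_le_one _)
          (subset_univ _)
    _ = ∏ q : Fin n × Fin n with q.1 < q.2, absCos (S q.1 q.2 + S q.2 q.1) :=
        prod_congr rfl fun q hq => by simp only [c, if_pos (mem_filter.1 hq).2]

lemma norm_symMatCharFun_le_one (A S : Matrix (Fin n) (Fin n) (ZMod p)) :
    ‖symMatCharFun A S‖ ≤ 1 :=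
  (norm_symMatCharFun_le A S).trans
    (prod_le_one (fun _ _ => absCos_nonneg _) fun _ _ => absCos_le_one _)

end CharFun

section HyperbolicForm

variable {R : Type*} [CommRing R] {κ : Type*} [Fintype κ]

/-- The hyperbolic form `⟨(u, v), (u', v')⟩ = u ⬝ v' + u' ⬝ v`. -/
def hyperbolicForm (R κ : Type*) [CommRing R] [Fintype κ] :
    LinearMap.BilinForm R ((κ → R) × (κ → R)) :=
  LinearMap.mk₂ R (fun x y => x.1 ⬝ᵥ y.2 + y.1 ⬝ᵥ x.2)
    (fun _ _ _ => by simp only [Prod.fst_add, Prod.snd_add, add_dotProduct, dotProduct_add]; ring)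
    (fun _ _ _ => by
      simp only [Prod.smul_fst, Prod.smul_snd, smul_dotProduct, dotProduct_smul, smul_add])
    (fun _ _ _ => by simp only [Prod.fst_add, Prod.snd_add, add_dotProduct, dotProduct_add]; ring)
    (fun _ _ _ => by
      simp only [Prod.smul_fst, Prod.smul_snd, smul_dotProduct, dotProduct_smul, smul_add])

lemma hyperbolicForm_apply (x y : (κ → R) × (κ → R)) :
    hyperbolicForm R κ x y = x.1 ⬝ᵥ y.2 + y.1 ⬝ᵥ x.2 := rfl

lemma hyperbolicForm_isSymm : (hyperbolicForm R κ).IsSymm :=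
  ⟨fun x y => by simp only [hyperbolicForm_apply, add_comm]⟩

lemma hyperbolicForm_nondegenerate : (hyperbolicForm R κ).Nondegenerate := by
  classical
  have separatingLeft (x) (hx : ∀ y, hyperbolicForm R κ x y = 0) : x = 0 := by
    ext l
    · simpa [hyperbolicForm_apply] using hx (0, Pi.single l 1)
    · simpa [hyperbolicForm_apply] using hx (Pi.single l 1, 0)
  exact ⟨separatingLeft, fun y hy => separatingLeft y fun x => by
    rw [← hyperbolicForm_isSymm.eq, hy]⟩

end HyperbolicForm

/-! ### Moments of the number of linearly independent tuples in the kernel -/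

section KernelFrames

variable {F : Type*} [Field F] [Fintype F] {n : ℕ}

open Classical in
/-- The linearly independent `m`-tuples of vectors in the kernel of `M`, encoded as the columns of
an `n × m` matrix. -/
def kernelFrames (M : Matrix (Fin n) (Fin n) F) (m : ℕ) : Finset (Matrix (Fin n) (Fin m) F) :=
  {v | LinearIndependent F v.col ∧ M * v = 0}

lemma mem_kernelFrames {M : Matrix (Fin n) (Fin n) F} {m : ℕ} {v : Matrix (Fin n) (Fin m) F} :
    v ∈ kernelFrames M m ↔ LinearIndependent F v.col ∧ M * v = 0 := by
  simp only [kernelFrames, mem_filter, mem_univ, true_and]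

lemma card_kernelFrames_eq_natCard (M : Matrix (Fin n) (Fin n) F) (m : ℕ) :
    #(kernelFrames M m) =
      Nat.card {s : Fin m → LinearMap.ker M.mulVecLin // LinearIndependent F s} := by
  have mulVec_col (v : Matrix (Fin n) (Fin m) F) : M * v = 0 ↔ ∀ l, M *ᵥ v.col l = 0 := by
    rw [← Matrix.ext_iff, forall_comm]
    exact forall_congr' fun l => funext_iff.symm
  have coe_linearIndependent (s : Fin m → LinearMap.ker M.mulVecLin) :
      LinearIndependent F s ↔ LinearIndependent F fun l => (s l : Fin n → F) :=
    (LinearMap.linearIndependent_iff (LinearMap.ker M.mulVecLin).subtype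
      (Submodule.ker_subtype _)).symm
  rw [← Nat.card_eq_finsetCard]
  exact Nat.card_congr {
    toFun v := ⟨fun l => ⟨v.1.col l, (mulVec_col v.1).1 (mem_kernelFrames.1 v.2).2 l⟩,
      (coe_linearIndependent _).2 (mem_kernelFrames.1 v.2).1⟩
    invFun s := ⟨Matrix.of fun i l => (s.1 l).1 i, mem_kernelFrames.2
      ⟨(coe_linearIndependent s.1).1 s.2, (mulVec_col _).2 fun l => (s.1 l).2⟩⟩
    left_inv _ := rfl
    right_inv _ := rfl }

lemma card_kernelFrames (M : Matrix (Fin n) (Fin n) F) (m : ℕ) :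
    (#(kernelFrames M m) : ℝ) = ∏ i : Fin m, ((Fintype.card F : ℝ) ^
      Module.finrank F (LinearMap.ker M.mulVecLin) - (Fintype.card F : ℝ) ^ (i : ℕ)) := by
  rw [card_kernelFrames_eq_natCard]
  obtain h | h := le_or_gt m (Module.finrank F (LinearMap.ker M.mulVecLin))
  · rw [card_linearIndependent h, Nat.cast_prod]
    refine prod_congr rfl fun i _ => ?_
    rw [Nat.cast_sub (Nat.pow_le_pow_right Fintype.card_pos (i.2.le.trans h)), Nat.cast_pow,
      Nat.cast_pow]
  · rw [prod_eq_zero (mem_univ ⟨_, h⟩) (sub_self _), Nat.cast_eq_zero]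
    have : IsEmpty {s : Fin m → LinearMap.ker M.mulVecLin // LinearIndependent F s} :=
      ⟨fun s => h.not_ge (by simpa using s.2.fintype_card_le_finrank)⟩
    exact Nat.card_of_isEmpty

omit [Fintype F] in
lemma det_eq_zero_iff_finrank_ker_ne_zero (M : Matrix (Fin n) (Fin n) F) :
    M.det = 0 ↔ Module.finrank F (LinearMap.ker M.mulVecLin) ≠ 0 := by
  rw [← Matrix.exists_mulVec_eq_zero_iff, Ne, Submodule.finrank_eq_zero,
    Matrix.ker_mulVecLin_eq_bot_iff]
  push Not
  simp only [and_comm]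

lemma le_card_kernelFrames_one (M : Matrix (Fin n) (Fin n) F) [Decidable (M.det = 0)] :
    ((Fintype.card F : ℝ) - 1) * (if M.det = 0 then 1 else 0) ≤ #(kernelFrames M 1) := by
  split_ifs with h
  · rw [card_kernelFrames, Fin.prod_univ_one, Fin.val_zero, pow_zero, mul_one]
    gcongr
    exact le_self_pow₀ (Nat.one_le_cast.2 Fintype.card_pos)
      ((det_eq_zero_iff_finrank_ker_ne_zero M).1 h)
  · rw [mul_zero]
    exact Nat.cast_nonneg _

/- If the corank is one then there are exactly `|F| - 1` nonzero kernel vectors; if it is at least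
two then the frames of size two outnumber the nonzero kernel vectors by the factor `|F|² - |F|`. -/
lemma card_kernelFrames_one_le (M : Matrix (Fin n) (Fin n) F) [Decidable (M.det = 0)] :
    (#(kernelFrames M 1) : ℝ) ≤ ((Fintype.card F : ℝ) - 1) * (if M.det = 0 then 1 else 0) +
      #(kernelFrames M 2) / ((Fintype.card F : ℝ) ^ 2 - Fintype.card F) := by
  have one_lt : (1 : ℝ) < Fintype.card F := Nat.one_lt_cast.2 Fintype.one_lt_card
  have denominator_pos : 0 < (Fintype.card F : ℝ) ^ 2 - Fintype.card F := by nlinarith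
  rw [card_kernelFrames, card_kernelFrames, Fin.prod_univ_one, Fin.prod_univ_two]
  simp only [Fin.val_zero, Fin.val_one, pow_zero, pow_one]
  obtain h | h | h : Module.finrank F (LinearMap.ker M.mulVecLin) = 0 ∨
      Module.finrank F (LinearMap.ker M.mulVecLin) = 1 ∨
      2 ≤ Module.finrank F (LinearMap.ker M.mulVecLin) := by omega
  · rw [if_neg (by rw [det_eq_zero_iff_finrank_ker_ne_zero, not_not, h]), h]
    simp
  · rw [if_pos (by rw [det_eq_zero_iff_finrank_ker_ne_zero, h]; exact one_ne_zero), h]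
    simp
  · rw [if_pos (by rw [det_eq_zero_iff_finrank_ker_ne_zero]; omega)]
    have pow_ge := pow_le_pow_right₀ one_lt.le h
    generalize (Fintype.card F : ℝ) ^ Module.finrank F (LinearMap.ker M.mulVecLin) = K at *
    rw [← sub_le_iff_le_add', le_div_iff₀ denominator_pos]
    nlinarith

end KernelFrames

section Isotropic

variable {F : Type*} [Field F] {n m : ℕ} {v : Matrix (Fin n) (Fin m) F}

lemma exists_leftInverse_of_linearIndependent_col (hv : LinearIndependent F v.col) :
    ∃ R : Matrix (Fin m) (Fin n) F, R * v = 1 := by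
  obtain ⟨g, hg⟩ := LinearMap.exists_leftInverse_of_injective v.mulVecLin
    (LinearMap.ker_eq_bot.2 (Matrix.mulVec_injective_iff.2 hv))
  refine ⟨LinearMap.toMatrix' g, ?_⟩
  calc LinearMap.toMatrix' g * v = LinearMap.toMatrix' (g ∘ₗ v.mulVecLin) := by
        rw [LinearMap.toMatrix'_comp, ← Matrix.toLin'_apply', LinearMap.toMatrix'_toLin']
    _ = 1 := by rw [hg, LinearMap.toMatrix'_id]

lemma skew_of_mul_transpose_add {R : Matrix (Fin m) (Fin n) F} (hR : R * v = 1)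
    {u : Matrix (Fin n) (Fin m) F} (hu : v * uᵀ + u * vᵀ = 0) : (R * u)ᵀ = -(R * u) := by
  have hR' : vᵀ * Rᵀ = 1 := by rw [← Matrix.transpose_mul, hR, Matrix.transpose_one]
  refine eq_neg_of_add_eq_zero_left ?_
  calc (R * u)ᵀ + R * u = (R * v) * uᵀ * Rᵀ + R * u * (vᵀ * Rᵀ) := by
        rw [hR, hR', Matrix.one_mul, Matrix.mul_one, Matrix.transpose_mul]
    _ = R * (v * uᵀ + u * vᵀ) * Rᵀ := by
        simp only [Matrix.mul_add, Matrix.add_mul, Matrix.mul_assoc]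
    _ = 0 := by rw [hu, Matrix.mul_zero, Matrix.zero_mul]

lemma eq_mul_of_mul_transpose_add {R : Matrix (Fin m) (Fin n) F} (hR : R * v = 1)
    {u : Matrix (Fin n) (Fin m) F} (hu : v * uᵀ + u * vᵀ = 0) : u = v * (R * u) := by
  have hR' : vᵀ * Rᵀ = 1 := by rw [← Matrix.transpose_mul, hR, Matrix.transpose_one]
  rw [← sub_eq_zero]
  calc u - v * (R * u) = v * (R * u)ᵀ + u * (vᵀ * Rᵀ) := by
        rw [skew_of_mul_transpose_add hR hu, hR', Matrix.mul_neg, Matrix.mul_one]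
        abel
    _ = (v * uᵀ + u * vᵀ) * Rᵀ := by
        simp only [Matrix.transpose_mul, Matrix.add_mul, Matrix.mul_assoc]
    _ = 0 := by rw [hu, Matrix.zero_mul]

lemma diag_eq_zero_of_transpose_eq_neg {K : Matrix (Fin m) (Fin m) F} (h2 : (2 : F) ≠ 0)
    (hK : Kᵀ = -K) (i : Fin m) : K i i = 0 := by
  have : K i i = -K i i := congrFun₂ hK i i
  rw [eq_neg_iff_add_eq_zero, ← two_mul] at this
  exact (mul_eq_zero.1 this).resolve_left h2

lemma eq_zero_of_mul_transpose_add {v u : Matrix (Fin n) (Fin 1) F} (h2 : (2 : F) ≠ 0)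
    (hv : LinearIndependent F v.col) (hu : v * uᵀ + u * vᵀ = 0) : u = 0 := by
  obtain ⟨R, hR⟩ := exists_leftInverse_of_linearIndependent_col hv
  have : R * u = 0 := by
    ext i j
    rw [Subsingleton.elim j i]
    exact diag_eq_zero_of_transpose_eq_neg h2 (skew_of_mul_transpose_add hR hu) i
  rw [eq_mul_of_mul_transpose_add hR hu, this, Matrix.mul_zero]

lemma card_mul_transpose_add_le [Fintype F] [DecidableEq F] {v : Matrix (Fin n) (Fin 2) F}
    (h2 : (2 : F) ≠ 0) (hv : LinearIndependent F v.col) :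
    #{u : Matrix (Fin n) (Fin 2) F | v * uᵀ + u * vᵀ = 0} ≤ Fintype.card F := by
  obtain ⟨R, hR⟩ := exists_leftInverse_of_linearIndependent_col hv
  refine card_le_card_of_injOn (fun u => (R * u) 0 1) (fun _ _ => mem_coe.2 (mem_univ _)) ?_
  intro u hu w hw huw
  have skew_u := skew_of_mul_transpose_add hR (mem_filter.1 (mem_coe.1 hu)).2
  have skew_w := skew_of_mul_transpose_add hR (mem_filter.1 (mem_coe.1 hw)).2
  have entry {K : Matrix (Fin 2) (Fin 2) F} (hK : Kᵀ = -K) : K 1 0 = -K 0 1 := congrFun₂ hK 0 1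
  have : R * u = R * w := by
    ext i j
    fin_cases i <;> fin_cases j
    · exact (diag_eq_zero_of_transpose_eq_neg h2 skew_u 0).trans
        (diag_eq_zero_of_transpose_eq_neg h2 skew_w 0).symm
    · exact huw
    · exact (entry skew_u).trans ((congrArg _ huw).trans (entry skew_w).symm)
    · exact (diag_eq_zero_of_transpose_eq_neg h2 skew_u 1).trans
        (diag_eq_zero_of_transpose_eq_neg h2 skew_w 1).symm
  rw [eq_mul_of_mul_transpose_add hR (mem_filter.1 (mem_coe.1 hu)).2, this,
    ← eq_mul_of_mul_transpose_add hR (mem_filter.1 (mem_coe.1 hw)).2]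

end Isotropic

section Moments

variable {p : ℕ} [Fact p.Prime] {n m : ℕ}

lemma expect_stdAddChar_trace (M : Matrix (Fin n) (Fin n) (ZMod p))
    (v : Matrix (Fin n) (Fin m) (ZMod p)) :
    𝔼 u : Matrix (Fin n) (Fin m) (ZMod p), ZMod.stdAddChar (M * (v * uᵀ)).trace =
      if M * v = 0 then 1 else 0 := by
  simp only [← Matrix.mul_assoc]
  split_ifs with h
  · simp only [h, Matrix.zero_mul, Matrix.trace_zero, AddChar.map_zero_eq_one,
      Fintype.expect_const]
  · let L : Matrix (Fin n) (Fin m) (ZMod p) →ₗ[ZMod p] ZMod p :=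
      { toFun u := (M * v * uᵀ).trace
        map_add' _ _ := by rw [Matrix.transpose_add, Matrix.mul_add, Matrix.trace_add]
        map_smul' _ _ := by
          rw [Matrix.transpose_smul, Matrix.mul_smul, Matrix.trace_smul, RingHom.id_apply] }
    have L_ne_zero : L ≠ 0 := fun hL => by
      refine h (Matrix.ext_iff_trace_mul_right.2 fun x => ?_)
      rw [Matrix.zero_mul, Matrix.trace_zero]
      exact LinearMap.congr_fun hL xᵀ
    have sum_eq_zero := sum_stdAddChar_linearMap L_ne_zero
    rw [Fintype.expect_eq_sum_div_card, div_eq_zero_iff]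
    exact .inl sum_eq_zero

/- `kernelFrames 0 m` is the set of all linearly independent `m`-tuples. -/
lemma expect_card_kernelFrames (A : Matrix (Fin n) (Fin n) (ZMod p)) :
    ((𝔼 ω, (#(kernelFrames (symMat (ZMod p) ω - A) m) : ℝ) : ℝ) : ℂ) =
      ∑ v ∈ kernelFrames (0 : Matrix (Fin n) (Fin n) (ZMod p)) m,
        𝔼 u : Matrix (Fin n) (Fin m) (ZMod p), symMatCharFun A (v * uᵀ) := by
  classical
  have kernelFrames_eq (M : Matrix (Fin n) (Fin n) (ZMod p)) : kernelFrames M m =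
      (kernelFrames (0 : Matrix (Fin n) (Fin n) (ZMod p)) m).filter
        fun v => M * v = (0 : Matrix (Fin n) (Fin m) (ZMod p)) := by
    ext v
    simp only [mem_filter, mem_kernelFrames, Matrix.zero_mul, and_true]
  calc ((𝔼 ω, (#(kernelFrames (symMat (ZMod p) ω - A) m) : ℝ) : ℝ) : ℂ)
      = 𝔼 ω, (#(kernelFrames (symMat (ZMod p) ω - A) m) : ℂ) := by
        simp only [← Complex.ofRealHom_eq_coe, map_expect, map_natCast]
    _ = 𝔼 ω, ∑ v ∈ kernelFrames (0 : Matrix (Fin n) (Fin n) (ZMod p)) m,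
          𝔼 u : Matrix (Fin n) (Fin m) (ZMod p),
            ZMod.stdAddChar ((symMat (ZMod p) ω - A) * (v * uᵀ)).trace := by
        simp only [expect_stdAddChar_trace, ← natCast_card_filter, ← kernelFrames_eq]
    _ = _ := by
        rw [expect_sum_comm]
        exact sum_congr rfl fun v _ => expect_comm ..

lemma hyperbolicForm_apply_rows {R : Type*} [CommRing R] (u v : Matrix (Fin n) (Fin m) R)
    (i j : Fin n) :
    hyperbolicForm R (Fin m) (u i, v i) (u j, v j) = (v * uᵀ + u * vᵀ) i j := by
  rw [hyperbolicForm_apply, add_comm, dotProduct_comm (u j)]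
  rfl

lemma isIsotropic_hyperbolicForm_iff {u v : Matrix (Fin n) (Fin m) (ZMod p)} :
    IsIsotropic (hyperbolicForm (ZMod p) (Fin m)) (fun i => (u i, v i)) ↔
      v * uᵀ + u * vᵀ = 0 := by
  simp only [IsIsotropic, hyperbolicForm_apply_rows, ← Matrix.ext_iff, Matrix.zero_apply]

lemma norm_symMatCharFun_le_decay (A : Matrix (Fin n) (Fin n) (ZMod p))
    (u v : Matrix (Fin n) (Fin m) (ZMod p)) :
    ‖symMatCharFun A (v * uᵀ)‖ ≤
      decay (hyperbolicForm (ZMod p) (Fin m)) fun i => (u i, v i) := by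
  refine (norm_symMatCharFun_le A _).trans_eq (prod_congr rfl fun q _ => ?_)
  have transpose_entry : (u * vᵀ) q.1 q.2 = (v * uᵀ) q.2 q.1 := by
    rw [← Matrix.transpose_apply (v * uᵀ), Matrix.transpose_mul, Matrix.transpose_transpose]
  rw [hyperbolicForm_apply_rows, Matrix.add_apply, transpose_entry]

lemma sum_decay_rows_le (hm : m = 1 ∨ m = 2) (hlog : 100 ≤ Real.log p)
    (hn : 10 ^ 20 * Real.log p ^ 4 ≤ n) :
    ∑ v : Matrix (Fin n) (Fin m) (ZMod p),
        ∑ u : Matrix (Fin n) (Fin m) (ZMod p) with v * uᵀ + u * vᵀ ≠ 0,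
          decay (hyperbolicForm (ZMod p) (Fin m)) (fun i => (u i, v i)) ≤
      (p : ℝ) ^ (m * n) / p := by
  classical
  have finrank_eq : Module.finrank (ZMod p) ((Fin m → ZMod p) × (Fin m → ZMod p)) = 2 * m := by
    rw [Module.finrank_prod, Module.finrank_fin_fun, two_mul]
  refine le_of_eq_of_le ?_ (sum_decay_not_isotropic_le_div hyperbolicForm_isSymm
    hyperbolicForm_nondegenerate hm finrank_eq hlog hn)
  simp only [sum_filter]
  rw [sum_comm, ← Fintype.sum_prod_type']
  refine Fintype.sum_equiv (Equiv.arrowProdEquivProdArrow (Fin n) (fun _ => Fin m → ZMod p)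
    (fun _ => Fin m → ZMod p)).symm _ _ fun x => ?_
  exact if_congr isIsotropic_hyperbolicForm_iff.not.symm rfl rfl

lemma card_matrix_zmod :
    Fintype.card (Matrix (Fin n) (Fin m) (ZMod p)) = p ^ (m * n) := by
  rw [Fintype.card_congr Matrix.of.symm, Fintype.card_fun, Fintype.card_fun, ZMod.card,
    Fintype.card_fin, Fintype.card_fin, pow_mul]

lemma norm_expect_card_kernelFrames_sub_le (hm : m = 1 ∨ m = 2) (hlog : 100 ≤ Real.log p)
    (hn : 10 ^ 20 * Real.log p ^ 4 ≤ n) (A : Matrix (Fin n) (Fin n) (ZMod p)) :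
    ‖((𝔼 ω, (#(kernelFrames (symMat (ZMod p) ω - A) m) : ℝ) : ℝ) : ℂ) -
      (∑ v ∈ kernelFrames (0 : Matrix (Fin n) (Fin n) (ZMod p)) m,
        ∑ u : Matrix (Fin n) (Fin m) (ZMod p) with v * uᵀ + u * vᵀ = 0,
          symMatCharFun A (v * uᵀ)) / (p : ℂ) ^ (m * n)‖ ≤ 1 / p := by
  have p_pos : (0 : ℝ) < p := Nat.cast_pos.2 (Fact.out : p.Prime).pos
  rw [expect_card_kernelFrames]
  simp only [Fintype.expect_eq_sum_div_card, card_matrix_zmod, Nat.cast_pow]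
  rw [← sum_div, ← sub_div, ← sum_sub_distrib, norm_div, norm_pow, Complex.norm_natCast,
    div_le_iff₀ (by positivity), one_div_mul_eq_div]
  calc _ = ‖∑ v ∈ kernelFrames (0 : Matrix (Fin n) (Fin n) (ZMod p)) m,
            ∑ u : Matrix (Fin n) (Fin m) (ZMod p) with v * uᵀ + u * vᵀ ≠ 0,
              symMatCharFun A (v * uᵀ)‖ := by
        refine congrArg _ (sum_congr rfl fun v _ => ?_)
        rw [sub_eq_iff_eq_add', sum_filter_add_sum_filter_not]
    _ ≤ ∑ v ∈ kernelFrames (0 : Matrix (Fin n) (Fin n) (ZMod p)) m,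
          ∑ u : Matrix (Fin n) (Fin m) (ZMod p) with v * uᵀ + u * vᵀ ≠ 0,
            decay (hyperbolicForm (ZMod p) (Fin m)) (fun i => (u i, v i)) :=
        norm_sum_le_of_le _ fun v _ => norm_sum_le_of_le _ fun u _ =>
          norm_symMatCharFun_le_decay A u v
    _ ≤ _ := (sum_le_univ_sum_of_nonneg fun v => sum_nonneg fun u _ => decay_nonneg).trans
          (sum_decay_rows_le hm hlog hn)

lemma two_ne_zero_of_le_log (hlog : 100 ≤ Real.log p) : (2 : ZMod p) ≠ 0 :=
  Ring.two_ne_zero (by rw [ZMod.ringChar_zmod_n]; exact ne_two_of_le_log hlog)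

lemma card_kernelFrames_zero_one :
    (#(kernelFrames (0 : Matrix (Fin n) (Fin n) (ZMod p)) 1) : ℝ) = (p : ℝ) ^ n - 1 := by
  rw [card_kernelFrames, Matrix.mulVecLin_zero, LinearMap.ker_zero, finrank_top,
    Module.finrank_fin_fun, ZMod.card, Fin.prod_univ_one, Fin.val_zero, pow_zero]

lemma sum_isotropic_symMatCharFun_eq_one (h2 : (2 : ZMod p) ≠ 0)
    (A : Matrix (Fin n) (Fin n) (ZMod p)) {v : Matrix (Fin n) (Fin 1) (ZMod p)}
    (hv : LinearIndependent (ZMod p) v.col) :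
    ∑ u : Matrix (Fin n) (Fin 1) (ZMod p) with v * uᵀ + u * vᵀ = 0,
      symMatCharFun A (v * uᵀ) = 1 := by
  rw [sum_eq_single 0, Matrix.transpose_zero, Matrix.mul_zero, symMatCharFun_zero]
  · intro u hu u_ne_zero
    exact absurd (eq_zero_of_mul_transpose_add h2 hv (mem_filter.1 hu).2) u_ne_zero
  · simp

lemma norm_sum_isotropic_symMatCharFun_le (h2 : (2 : ZMod p) ≠ 0)
    (A : Matrix (Fin n) (Fin n) (ZMod p)) {v : Matrix (Fin n) (Fin 2) (ZMod p)}
    (hv : LinearIndependent (ZMod p) v.col) :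
    ‖∑ u : Matrix (Fin n) (Fin 2) (ZMod p) with v * uᵀ + u * vᵀ = 0,
      symMatCharFun A (v * uᵀ)‖ ≤ p := by
  have card_le := card_mul_transpose_add_le h2 hv
  rw [ZMod.card] at card_le
  refine (norm_sum_le_of_le _ fun u _ => norm_symMatCharFun_le_one A (v * uᵀ)).trans ?_
  rw [sum_const, nsmul_one]
  exact_mod_cast card_le

lemma abs_expect_card_kernelFrames_one_sub_le (hlog : 100 ≤ Real.log p)
    (hn : 10 ^ 20 * Real.log p ^ 4 ≤ n) (A : Matrix (Fin n) (Fin n) (ZMod p)) :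
    |𝔼 ω, (#(kernelFrames (symMat (ZMod p) ω - A) 1) : ℝ) - 1| ≤ 2 / p := by
  have p_pos : (0 : ℝ) < p := Nat.cast_pos.2 (Fact.out : p.Prime).pos
  have deviation := norm_expect_card_kernelFrames_sub_le (.inl rfl) hlog hn A
  rw [sum_congr rfl fun v hv => sum_isotropic_symMatCharFun_eq_one (two_ne_zero_of_le_log hlog) A
    (mem_kernelFrames.1 hv).1, sum_const, nsmul_one, ← Complex.ofReal_natCast (#_),
    card_kernelFrames_zero_one, one_mul] at deviation
  replace deviation : |𝔼 ω, (#(kernelFrames (symMat (ZMod p) ω - A) 1) : ℝ) -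
      ((p : ℝ) ^ n - 1) / (p : ℝ) ^ n| ≤ 1 / p := by
    rw [← Real.norm_eq_abs, ← Complex.norm_real]
    exact_mod_cast deviation
  have n_ne_zero : n ≠ 0 := by
    rintro rfl
    rw [Nat.cast_zero] at hn
    linarith [show 0 < 10 ^ 20 * Real.log p ^ 4 by positivity]
  have inv_pow_le : 1 / (p : ℝ) ^ n ≤ 1 / p := by
    gcongr
    exact le_self_pow₀ (Nat.one_le_cast.2 (Fact.out : p.Prime).one_le) n_ne_zero
  calc |𝔼 ω, (#(kernelFrames (symMat (ZMod p) ω - A) 1) : ℝ) - 1|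
      = |(𝔼 ω, (#(kernelFrames (symMat (ZMod p) ω - A) 1) : ℝ) -
          ((p : ℝ) ^ n - 1) / (p : ℝ) ^ n) - 1 / (p : ℝ) ^ n| := by
        congr 1; field_simp; ring
    _ ≤ 1 / p + 1 / p := (abs_sub _ _).trans (add_le_add deviation
        ((abs_of_nonneg (by positivity)).trans_le inv_pow_le))
    _ = 2 / p := by ring

lemma expect_card_kernelFrames_two_le (hlog : 100 ≤ Real.log p)
    (hn : 10 ^ 20 * Real.log p ^ 4 ≤ n) (A : Matrix (Fin n) (Fin n) (ZMod p)) :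
    𝔼 ω, (#(kernelFrames (symMat (ZMod p) ω - A) 2) : ℝ) ≤ p + 1 / p := by
  have p_pos : (0 : ℝ) < p := Nat.cast_pos.2 (Fact.out : p.Prime).pos
  have deviation := norm_expect_card_kernelFrames_sub_le (.inr rfl) hlog hn A
  have main_term_le : ‖(∑ v ∈ kernelFrames (0 : Matrix (Fin n) (Fin n) (ZMod p)) 2,
      ∑ u : Matrix (Fin n) (Fin 2) (ZMod p) with v * uᵀ + u * vᵀ = 0,
        symMatCharFun A (v * uᵀ)) / (p : ℂ) ^ (2 * n)‖ ≤ p := by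
    rw [norm_div, norm_pow, Complex.norm_natCast, div_le_iff₀ (by positivity)]
    refine (norm_sum_le_of_le _ fun v hv => norm_sum_isotropic_symMatCharFun_le
      (two_ne_zero_of_le_log hlog) A (mem_kernelFrames.1 hv).1).trans ?_
    rw [sum_const, nsmul_eq_mul, mul_comm]
    gcongr
    exact_mod_cast (card_le_univ _).trans_eq card_matrix_zmod
  have expect_nonneg : 0 ≤ 𝔼 ω, (#(kernelFrames (symMat (ZMod p) ω - A) 2) : ℝ) :=
    expect_nonneg fun _ _ => Nat.cast_nonneg _
  rw [← Real.norm_of_nonneg expect_nonneg, ← Complex.norm_real]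
  exact (norm_le_norm_add_norm_sub' _ _).trans (add_le_add main_term_le deviation)

end Moments

/-! ### The singularity probability -/

section Singularity

lemma abs_sub_inv_le_of_moment_bounds {P I N D : ℝ} (hP : 3 ≤ P) (lower : (P - 1) * I ≤ N)
    (upper : N ≤ (P - 1) * I + D / (P ^ 2 - P)) (hN : |N - 1| ≤ 2 / P) (hD : D ≤ P + 1 / P) :
    |I - 1 / P| ≤ 10 / P ^ 2 := by
  obtain ⟨hN_lower, hN_upper⟩ := abs_le.1 hN
  have P_pos : 0 < P := by linarith
  have correction_le : D / (P ^ 2 - P) ≤ 3 / P := by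
    rw [div_le_div_iff₀ (by nlinarith) P_pos]
    have : (P + 1 / P) * P = P ^ 2 + 1 := by field_simp
    nlinarith
  have scaled : |(P - 1) * (I - 1 / P)| ≤ 6 / P := by
    have : (P - 1) * (I - 1 / P) = (P - 1) * I - 1 + 1 / P := by field_simp; ring
    rw [this, abs_le]
    have two_div : 2 / P = 2 * (1 / P) := by ring
    have three_div : 3 / P = 3 * (1 / P) := by ring
    have six_div : 6 / P = 6 * (1 / P) := by ring
    have inv_pos : 0 < 1 / P := by positivity
    constructor <;> linarith
  rw [abs_mul, abs_of_pos (by linarith), le_div_iff₀ P_pos] at scaled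
  rw [le_div_iff₀ (by positivity)]
  nlinarith [abs_nonneg (I - 1 / P)]

variable {p : ℕ} [Fact p.Prime] {n : ℕ}

lemma abs_prob_det_sub_inv_le_of_le_log (hlog : 100 ≤ Real.log p)
    (hn : 10 ^ 20 * Real.log p ^ 4 ≤ n) (A : Matrix (Fin n) (Fin n) (ZMod p)) :
    |prob (fun ω => (symMat (ZMod p) ω - A).det = 0) - 1 / p| ≤ 10 / (p : ℝ) ^ 2 := by
  have three_le : (3 : ℝ) ≤ p := by
    exact_mod_cast (Fact.out : p.Prime).two_le.lt_of_ne' (ne_two_of_le_log hlog)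
  rw [prob_eq_expect]
  refine abs_sub_inv_le_of_moment_bounds three_le ?_ ?_
    (abs_expect_card_kernelFrames_one_sub_le hlog hn A) (expect_card_kernelFrames_two_le hlog hn A)
  · rw [mul_expect]
    exact expect_le_expect fun ω _ => by
      simpa only [ZMod.card] using le_card_kernelFrames_one (symMat (ZMod p) ω - A)
  · rw [mul_expect, expect_div, ← expect_add_distrib]
    exact expect_le_expect fun ω _ => by
      simpa only [ZMod.card] using card_kernelFrames_one_le (symMat (ZMod p) ω - A)

lemma abs_prob_sub_inv_le_one {Ω : Type*} [Fintype Ω] (E : Ω → Prop) (k : ℕ) :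
    |prob E - 1 / k| ≤ 1 := by
  have prob_nonneg : 0 ≤ prob E := by unfold prob; positivity
  have prob_le_one : prob E ≤ 1 :=
    div_le_one_of_le₀ (Nat.cast_le.2 (card_le_univ _)) (Nat.cast_nonneg _)
  have inv_nonneg : (0 : ℝ) ≤ 1 / k := by positivity
  have inv_le_one : (1 : ℝ) / k ≤ 1 := by
    rw [one_div]
    exact Nat.cast_inv_le_one k
  rw [abs_le]
  constructor <;> linarith

end Singularity

theorem singularity_probability_symmetric_rademacher_general :
    ∃ η C : ℝ, 0 < η ∧ 0 < C ∧
      ∀ n p : ℕ, p.Prime →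
        (p : ℝ) ≤ Real.exp (η * (n : ℝ) ^ ((1 : ℝ) / 4)) →
        ∀ A : Matrix (Fin n) (Fin n) (ZMod p),
          |prob (fun ω : Fin n → Fin n → Bool => (symMat (ZMod p) ω - A).det = 0) - 1 / (p : ℝ)|
            ≤ C / (p : ℝ) ^ 2 := by
  refine ⟨1 / 10 ^ 5, Real.exp 200 + 10, by norm_num, by positivity, fun n p hp p_le A => ?_⟩
  have : Fact p.Prime := ⟨hp⟩
  have p_pos : (0 : ℝ) < p := Nat.cast_pos.2 hp.pos
  obtain hlog | hlog := le_total 100 (Real.log p)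
  · have n_ge : 10 ^ 20 * Real.log p ^ 4 ≤ n := by
      have log_le := (Real.log_le_iff_le_exp p_pos).2 p_le
      calc 10 ^ 20 * Real.log p ^ 4 = (10 ^ 5 * Real.log p) ^ 4 := by ring
        _ ≤ ((n : ℝ) ^ ((1 : ℝ) / 4)) ^ 4 := by gcongr; linarith
        _ = n := by
            rw [one_div, ← Nat.cast_ofNat, Real.rpow_inv_natCast_pow n.cast_nonneg four_ne_zero]
    refine (abs_prob_det_sub_inv_le_of_le_log hlog n_ge A).trans ?_
    gcongr
    linarith [Real.exp_pos 200]
  · refine (abs_prob_sub_inv_le_one _ p).trans ((one_le_div (by positivity)).2 ?_)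
    calc (p : ℝ) ^ 2 ≤ Real.exp 100 ^ 2 := by gcongr; exact (Real.log_le_iff_le_exp p_pos).1 hlog
      _ = Real.exp 200 := by rw [← Real.exp_nat_mul]; norm_num
      _ ≤ Real.exp 200 + 10 := by linarith

/-- Singularity probability of `M_n - λ I_n` over `F_p` is `1/p + O(1/p²) +
O(exp(-η n / log p))` for primes `2 < p ≤ exp(η n^{1/4})`. -/
theorem singularity_probability_symmetric_rademacher :
    ∃ η C : ℝ, 0 < η ∧ 0 < C ∧
      ∀ n p : ℕ, p.Prime → 2 < p →
        (p : ℝ) ≤ Real.exp (η * (n : ℝ) ^ ((1 : ℝ) / 4)) →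
        ∀ lam : ZMod p,
          |prob (fun ω : Fin n → Fin n → Bool =>
              (symMat (ZMod p) ω - lam • (1 : Matrix (Fin n) (Fin n) (ZMod p))).det = 0) -
            1 / (p : ℝ)|
          ≤ C / (p : ℝ) ^ 2 + C * Real.exp (-η * n / Real.log p) := by
  obtain ⟨η, C, η_pos, C_pos, h⟩ := singularity_probability_symmetric_rademacher_general
  refine ⟨η, C, η_pos, C_pos, fun n p hp _ p_le lam => (h n p hp p_le _).trans ?_⟩
  exact le_add_of_nonneg_right (by positivity)
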